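/- arXiv:1409.1729 — 11 statements merged into one kernel-verified Lean document; each statement's English description precedes it below -/
import Mathlib

section
/- Let (L, α_L) be a Hom-Lie algebra over a field K such that α_L : L → L is surjective, and let (H, α_L|) and (K, α_L|) be ideals of (L, α_L). Then the commutator ([H,K], α_L|), i.e. the subspace of L spanned by all brackets [h,k] with h ∈ H and k ∈ K, is an ideal of (L, α_L). -/
open TensorProduct

/-- A (multiplicative) Hom-Lie algebra structure on a vector space `L` over a field `K`:
a bilinear bracket satisfying skew-symmetry and the Hom-Jacobi identity, together with a
linear endomorphism preserving the bracket. -/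
structure HomLieStr (K : Type) [Field K] (L : Type) [AddCommGroup L] [Module K L] : Type where
  br : L →ₗ[K] L →ₗ[K] L
  α : L →ₗ[K] L
  skew : ∀ x y, br x y = - br y x
  jacobi : ∀ x y z, br (α x) (br y z) + br (α z) (br x y) + br (α y) (br z x) = 0
  αbr : ∀ x y, α (br x y) = br (α x) (α y)

/-- A Hom-action of the Hom-Lie algebra `(L, HL)` on the Hom-Lie algebra `(M, HM)`. -/
structure HomAction {K L M : Type} [Field K] [AddCommGroup L] [Module K L]
    [AddCommGroup M] [Module K M] (HL : HomLieStr K L) (HM : HomLieStr K M) : Type where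
  act : L →ₗ[K] M →ₗ[K] M
  ax1 : ∀ x y m, act (HL.br x y) (HM.α m) = act (HL.α x) (act y m) - act (HL.α y) (act x m)
  ax2 : ∀ x m m', act (HL.α x) (HM.br m m') =
    HM.br (act x m) (HM.α m') + HM.br (HM.α m) (act x m')
  ax3 : ∀ x m, HM.α (act x m) = act (HL.α x) (HM.α m)

/-- A homomorphism of Hom-Lie algebras: a linear map preserving brackets and commuting with
the structure endomorphisms. -/
def IsHomLieHom {K L L' : Type} [Field K] [AddCommGroup L] [Module K L]
    [AddCommGroup L'] [Module K L'] (HL : HomLieStr K L) (HL' : HomLieStr K L')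
    (f : L →ₗ[K] L') : Prop :=
  (∀ x y, f (HL.br x y) = HL'.br (f x) (f y)) ∧ (∀ x, f (HL.α x) = HL'.α (f x))

/-- Compatibility of two Hom-actions of `(M, HM)` and `(N, HN)` on each other. -/
def Compatible {K M N : Type} [Field K] [AddCommGroup M] [Module K M]
    [AddCommGroup N] [Module K N] {HM : HomLieStr K M} {HN : HomLieStr K N}
    (aMN : HomAction HM HN) (aNM : HomAction HN HM) : Prop :=
  (∀ m n m', aNM.act (aMN.act m n) m' = HM.br m' (aNM.act n m)) ∧
  (∀ n m n', aMN.act (aNM.act n m) n' = HN.br n' (aMN.act m n))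

/-- The subspace `D(M,N)` of `M ⊗ N` from the definition of the non-abelian tensor product
of Hom-Lie algebras. -/
def Dsub {K M N : Type} [Field K] [AddCommGroup M] [Module K M] [AddCommGroup N] [Module K N]
    (brM : M →ₗ[K] M →ₗ[K] M) (αM : M →ₗ[K] M)
    (brN : N →ₗ[K] N →ₗ[K] N) (αN : N →ₗ[K] N)
    (actMN : M →ₗ[K] N →ₗ[K] N) (actNM : N →ₗ[K] M →ₗ[K] M) : Submodule K (M ⊗[K] N) :=
  Submodule.span K
    ({x | ∃ m m' n, x = brM m m' ⊗ₜ[K] αN n - αM m ⊗ₜ[K] actMN m' n + αM m' ⊗ₜ[K] actMN m n} ∪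
     {x | ∃ m n n', x = αM m ⊗ₜ[K] brN n n' - actNM n' m ⊗ₜ[K] αN n + actNM n m ⊗ₜ[K] αN n'} ∪
     {x | ∃ m n, x = actNM n m ⊗ₜ[K] actMN m n} ∪
     {x | ∃ m m' n n', x = actNM n m ⊗ₜ[K] actMN m' n' + actNM n' m' ⊗ₜ[K] actMN m n} ∪
     {x | ∃ m m' m'' n n' n'', x =
        brM (actNM n m) (actNM n' m') ⊗ₜ[K] αN (actMN m'' n'') +
        brM (actNM n' m') (actNM n'' m'') ⊗ₜ[K] αN (actMN m n) +
        brM (actNM n'' m'') (actNM n m) ⊗ₜ[K] αN (actMN m' n')})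

/-- `T` is "the" Hom-Lie tensor product structure on the quotient `(M ⊗ N) ⧸ D` :
`D` is the subspace `D(M,N)`, the bracket is given on generators by
`[m⋆n, m'⋆n'] = -(ⁿm)⋆(^{m'}n')`, and the endomorphism is induced by `α_M ⊗ α_N`. -/
def IsStarStruct {K M N : Type} [Field K] [AddCommGroup M] [Module K M]
    [AddCommGroup N] [Module K N] (HM : HomLieStr K M) (HN : HomLieStr K N)
    (aMN : HomAction HM HN) (aNM : HomAction HN HM)
    (D : Submodule K (M ⊗[K] N)) (T : HomLieStr K ((M ⊗[K] N) ⧸ D)) : Prop :=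
  D = Dsub HM.br HM.α HN.br HN.α aMN.act aNM.act ∧
  (∀ m n m' n', T.br (D.mkQ (m ⊗ₜ[K] n)) (D.mkQ (m' ⊗ₜ[K] n')) =
      - D.mkQ (aNM.act n m ⊗ₜ[K] aMN.act m' n')) ∧
  (∀ m n, T.α (D.mkQ (m ⊗ₜ[K] n)) = D.mkQ (HM.α m ⊗ₜ[K] HN.α n))

/-- `H` is an ideal of the Hom-Lie algebra `(L, HL)`. -/
def IsIdeal {K L : Type} [Field K] [AddCommGroup L] [Module K L]
    (HL : HomLieStr K L) (H : Submodule K L) : Prop :=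
  (∀ x ∈ H, HL.α x ∈ H) ∧ (∀ x ∈ H, ∀ y : L, HL.br x y ∈ H)

/-- If `α_L` is surjective and `H`, `I` are ideals of the Hom-Lie algebra
`(L, α_L)`, then the commutator `[H, I]`, i.e. the subspace spanned by all brackets `[h,k]`
with `h ∈ H`, `k ∈ I`, is an ideal of `(L, α_L)`. -/
theorem statement0 {K L : Type} [Field K] [AddCommGroup L] [Module K L]
    (HL : HomLieStr K L) (hsurj : Function.Surjective HL.α)
    (H I : Submodule K L) (hH : IsIdeal HL H) (hI : IsIdeal HL I) :
    IsIdeal HL (Submodule.span K {z | ∃ h ∈ H, ∃ k ∈ I, z = HL.br h k}) := by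
  constructor
  · intro x hx
    induction hx using Submodule.span_induction with
    | mem x hx =>
      obtain ⟨h, hh, k, hk, rfl⟩ := hx
      exact Submodule.subset_span ⟨_, hH.1 h hh, _, hI.1 k hk, HL.αbr h k⟩
    | zero => rw [map_zero]; exact Submodule.zero_mem _
    | add a b _ _ ha hb => rw [map_add]; exact Submodule.add_mem _ ha hb
    | smul c a _ ha => rw [map_smul]; exact Submodule.smul_mem _ c ha
  · intro x hx z
    obtain ⟨y, rfl⟩ := hsurj z
    induction hx using Submodule.span_induction with
    | mem x hx =>
      obtain ⟨h, hh, k, hk, rfl⟩ := hx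
      have e : HL.br (HL.br h k) (HL.α y) =
          HL.br (HL.br h y) (HL.α k) + HL.br (HL.α h) (HL.br k y) := by
        have j := HL.jacobi y h k
        rw [HL.skew (HL.α y), HL.skew (HL.α k), HL.skew y h, map_neg,
          LinearMap.neg_apply, neg_neg, add_assoc, neg_add_eq_zero] at j
        exact j
      rw [e]
      exact Submodule.add_mem _
        (Submodule.subset_span ⟨_, hH.2 h hh y, _, hI.1 k hk, rfl⟩)
        (Submodule.subset_span ⟨_, hH.1 h hh, _, hI.2 k hk y, rfl⟩)
    | zero => rw [map_zero]; exact Submodule.zero_mem _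
    | add a b _ _ ha hb =>
      rw [map_add, LinearMap.add_apply]; exact Submodule.add_mem _ ha hb
    | smul c a _ ha =>
      rw [map_smul, LinearMap.smul_apply]; exact Submodule.smul_mem _ c ha
end

section
/- Let (M, α_M) be a Hom-module over a Hom-Lie algebra (L, α_L). For every homomorphism of Hom-Lie algebras f : (K, α_K) → (L, α_L) and every derivation d : (K, α_K) → (M, α_M) (where (M, α_M) is regarded as a Hom-module over (K, α_K) via f, i.e. ᵏm = ^{f(k)}m), there exists a unique homomorphism of Hom-Lie algebras h : (K, α_K) → (M ⋊ L, α_⋊) such that π ∘ h = f and θ ∘ h = d, where π : M ⋊ L → L is the projection (m,l) ↦ l and θ : M ⋊ L → M is the projection (m,l) ↦ m. -/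
open TensorProduct

/-- A Hom-module `(M, αM)` over a Hom-Lie algebra `(L, HL)`: an abelian Hom-Lie algebra
equipped with a Hom-action of `(L, HL)` (the axiom involving the bracket of `M` is trivial). -/
structure HomModule {K L : Type} [Field K] [AddCommGroup L] [Module K L]
    (HL : HomLieStr K L) (M : Type) [AddCommGroup M] [Module K M] : Type where
  αM : M →ₗ[K] M
  act : L →ₗ[K] M →ₗ[K] M
  ax1 : ∀ x y m, act (HL.br x y) (αM m) = act (HL.α x) (act y m) - act (HL.α y) (act x m)
  ax3 : ∀ x m, αM (act x m) = act (HL.α x) (αM m)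

/-- `S` is the semi-direct product Hom-Lie structure `M ⋊ L` of a Hom-module `(M, αM, act)`
over `(L, HL)` : bracket `[(m₁,x₁),(m₂,x₂)] = (^{α_L(x₁)}m₂ − ^{α_L(x₂)}m₁, [x₁,x₂])`
(the summand `[m₁,m₂]` vanishes since `M` is abelian), endomorphism `(αM, α_L)`. -/
def IsSemidirect {K L M : Type} [Field K] [AddCommGroup L] [Module K L]
    [AddCommGroup M] [Module K M] (HL : HomLieStr K L) (Mod : HomModule HL M)
    (S : HomLieStr K (M × L)) : Prop :=
  (∀ m₁ x₁ m₂ x₂, S.br (m₁, x₁) (m₂, x₂) =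
      (Mod.act (HL.α x₁) m₂ - Mod.act (HL.α x₂) m₁, HL.br x₁ x₂)) ∧
  (∀ m x, S.α (m, x) = (Mod.αM m, HL.α x))

/-- Let `(M, α_M)` be a Hom-module over a Hom-Lie algebra `(L, α_L)`.
For every homomorphism of Hom-Lie algebras `f : (K₀, α_{K₀}) → (L, α_L)` and every
derivation `d : (K₀, α_{K₀}) → (M, α_M)` (with `M` a Hom-module over `K₀` via `f`),
there is a unique homomorphism of Hom-Lie algebras `h : (K₀, α_{K₀}) → (M ⋊ L, α_⋊)`
with `π ∘ h = f` and `θ ∘ h = d`, where `π(m,l) = l` and `θ(m,l) = m`. -/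
theorem statement1 {K L M K₀ : Type} [Field K] [AddCommGroup L] [Module K L]
    [AddCommGroup M] [Module K M] [AddCommGroup K₀] [Module K K₀]
    (HL : HomLieStr K L) (Mod : HomModule HL M)
    (S : HomLieStr K (M × L)) (hS : IsSemidirect HL Mod S)
    (HK₀ : HomLieStr K K₀) (f : K₀ →ₗ[K] L) (hf : IsHomLieHom HK₀ HL f)
    (d : K₀ →ₗ[K] M)
    (hd1 : ∀ x y, d (HK₀.br x y) =
      Mod.act (HL.α (f x)) (d y) - Mod.act (HL.α (f y)) (d x))
    (hd2 : ∀ x, Mod.αM (d x) = d (HK₀.α x)) :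
    ∃! h : K₀ →ₗ[K] M × L, IsHomLieHom HK₀ S h ∧
      (∀ k, (h k).2 = f k) ∧ (∀ k, (h k).1 = d k) := by
  refine ⟨d.prod f, ⟨⟨fun x y => ?_, fun x => ?_⟩, fun k => rfl, fun k => rfl⟩, ?_⟩
  · simp only [LinearMap.prod_apply, Function.prod_apply, hS.1, hd1, hf.1]
  · simp only [LinearMap.prod_apply, Function.prod_apply, hS.2, hd2, hf.2]
  · rintro h ⟨-, h2, h1⟩
    exact LinearMap.ext fun k => Prod.ext (h1 k) (h2 k)
end

section
/- Let (M, α_M) and (N, α_N) be Hom-Lie algebras acting trivially on each other (ⁿm = 0 and ᵐn = 0 for all m, n), and suppose both α_M and α_N are surjective. Then there is an isomorphism of abelian Hom-Lie algebras (M⋆N, α_{M⋆N}) ≅ (M^{ab} ⊗ N^{ab}, α_{M^{ab}⊗N^{ab}}), where M^{ab} = M/[M,M], N^{ab} = N/[N,N] and α_{M^{ab}⊗N^{ab}} is induced by α_M and α_N. -/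
open TensorProduct

/-- Let `(M, α_M)` and `(N, α_N)` be Hom-Lie algebras acting trivially on
each other, with `α_M` and `α_N` surjective.  Then `(M⋆N, α_{M⋆N})` is abelian and there is
an isomorphism of abelian Hom-Lie algebras `(M⋆N, α_{M⋆N}) ≅ (M^{ab} ⊗ N^{ab}, α_{M^{ab}⊗N^{ab}})`,
carrying `m⋆n` to `m̄ ⊗ n̄` and intertwining `α_{M⋆N}` with the endomorphism induced by
`α_M` and `α_N`. -/
theorem statement6 {K M N : Type} [Field K] [AddCommGroup M] [Module K M]
    [AddCommGroup N] [Module K N] (HM : HomLieStr K M) (HN : HomLieStr K N)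
    (aMN : HomAction HM HN) (aNM : HomAction HN HM)
    (htrivMN : ∀ m n, aMN.act m n = 0) (htrivNM : ∀ n m, aNM.act n m = 0)
    (hsM : Function.Surjective HM.α) (hsN : Function.Surjective HN.α)
    (D : Submodule K (M ⊗[K] N)) (T : HomLieStr K ((M ⊗[K] N) ⧸ D))
    (hT : IsStarStruct HM HN aMN aNM D T)
    (Mc : Submodule K M) (hMc : Mc = Submodule.span K {z | ∃ a b, z = HM.br a b})
    (Nc : Submodule K N) (hNc : Nc = Submodule.span K {z | ∃ a b, z = HN.br a b}) :
    (∀ s t, T.br s t = 0) ∧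
    ∃ e : ((M ⊗[K] N) ⧸ D) ≃ₗ[K] ((M ⧸ Mc) ⊗[K] (N ⧸ Nc)),
      (∀ m n, e (D.mkQ (m ⊗ₜ[K] n)) = Mc.mkQ m ⊗ₜ[K] Nc.mkQ n) ∧
      (∀ m n, e (T.α (D.mkQ (m ⊗ₜ[K] n))) = Mc.mkQ (HM.α m) ⊗ₜ[K] Nc.mkQ (HN.α n)) := by
  obtain ⟨hD, hbr, hα⟩ := hT
  have hmem1 : ∀ a b n, HM.br a b ⊗ₜ[K] n ∈ D := by
    intro a b n
    obtain ⟨n, rfl⟩ := hsN n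
    rw [hD]
    apply Submodule.subset_span
    refine Or.inl (Or.inl (Or.inl (Or.inl ⟨a, b, n, ?_⟩)))
    simp [htrivMN]
  have hmem2 : ∀ m a b, m ⊗ₜ[K] HN.br a b ∈ D := by
    intro m a b
    obtain ⟨m, rfl⟩ := hsM m
    rw [hD]
    apply Submodule.subset_span
    refine Or.inl (Or.inl (Or.inl (Or.inr ⟨m, a, b, ?_⟩)))
    simp [htrivNM]
  have hM0 : ∀ a b, Mc.mkQ (HM.br a b) = 0 := by
    intro a b
    rw [Submodule.mkQ_apply, Submodule.Quotient.mk_eq_zero, hMc]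
    exact Submodule.subset_span ⟨a, b, rfl⟩
  have hN0 : ∀ a b, Nc.mkQ (HN.br a b) = 0 := by
    intro a b
    rw [Submodule.mkQ_apply, Submodule.Quotient.mk_eq_zero, hNc]
    exact Submodule.subset_span ⟨a, b, rfl⟩
  have hDle : D ≤ LinearMap.ker (TensorProduct.map Mc.mkQ Nc.mkQ) := by
    rw [hD]
    refine Submodule.span_le.2 ?_
    rintro x ((((⟨m, m', n, rfl⟩ | ⟨m, n, n', rfl⟩) | ⟨m, n, rfl⟩) | ⟨m, m', n, n', rfl⟩) |
      ⟨m, m', m'', n, n', n'', rfl⟩)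
    · simp only [htrivMN, htrivNM, TensorProduct.tmul_zero, sub_zero, add_zero, SetLike.mem_coe,
        LinearMap.mem_ker, TensorProduct.map_tmul, hM0, TensorProduct.zero_tmul]
    · simp only [htrivMN, htrivNM, TensorProduct.zero_tmul, sub_zero, add_zero, SetLike.mem_coe,
        LinearMap.mem_ker, TensorProduct.map_tmul, hN0, TensorProduct.tmul_zero]
    · simp [htrivMN, htrivNM]
    · simp [htrivMN, htrivNM]
    · simp [htrivMN, htrivNM]
  let f : ((M ⊗[K] N) ⧸ D) →ₗ[K] ((M ⧸ Mc) ⊗[K] (N ⧸ Nc)) :=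
    D.liftQ (TensorProduct.map Mc.mkQ Nc.mkQ) hDle
  let B : M →ₗ[K] N →ₗ[K] ((M ⊗[K] N) ⧸ D) := (TensorProduct.mk K M N).compr₂ D.mkQ
  have hB : ∀ m n, B m n = D.mkQ (m ⊗ₜ[K] n) := fun m n => rfl
  have hNk : ∀ m, Nc ≤ LinearMap.ker (B m) := by
    intro m
    rw [hNc]
    refine Submodule.span_le.2 ?_
    rintro x ⟨a, b, rfl⟩
    rw [SetLike.mem_coe, LinearMap.mem_ker, hB, Submodule.mkQ_apply,
      Submodule.Quotient.mk_eq_zero]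
    exact hmem2 m a b
  let C : M →ₗ[K] (N ⧸ Nc) →ₗ[K] ((M ⊗[K] N) ⧸ D) :=
    { toFun := fun m => Nc.liftQ (B m) (hNk m)
      map_add' := by
        intro x y
        apply Submodule.linearMap_qext
        ext n
        simp
      map_smul' := by
        intro c x
        apply Submodule.linearMap_qext
        ext n
        simp }
  have hC : ∀ m n, C m (Nc.mkQ n) = D.mkQ (m ⊗ₜ[K] n) := fun m n => rfl
  have hMk : Mc ≤ LinearMap.ker C := by
    rw [hMc]
    refine Submodule.span_le.2 ?_
    rintro x ⟨a, b, rfl⟩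
    rw [SetLike.mem_coe, LinearMap.mem_ker]
    apply Submodule.linearMap_qext
    refine LinearMap.ext fun n => ?_
    rw [LinearMap.comp_apply, hC, Submodule.mkQ_apply, LinearMap.zero_comp, LinearMap.zero_apply,
      Submodule.Quotient.mk_eq_zero]
    exact hmem1 a b n
  let g : ((M ⧸ Mc) ⊗[K] (N ⧸ Nc)) →ₗ[K] ((M ⊗[K] N) ⧸ D) :=
    TensorProduct.lift (Mc.liftQ C hMk)
  have hf : ∀ m n, f (D.mkQ (m ⊗ₜ[K] n)) = Mc.mkQ m ⊗ₜ[K] Nc.mkQ n := fun m n => rfl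
  have hg : ∀ m n, g (Mc.mkQ m ⊗ₜ[K] Nc.mkQ n) = D.mkQ (m ⊗ₜ[K] n) := fun m n => rfl
  have hfg : f.comp g = LinearMap.id := by
    apply TensorProduct.ext'
    intro x y
    obtain ⟨m, rfl⟩ := Mc.mkQ_surjective x
    obtain ⟨n, rfl⟩ := Nc.mkQ_surjective y
    rw [LinearMap.comp_apply, hg, hf, LinearMap.id_apply]
  have hgf : g.comp f = LinearMap.id := by
    apply Submodule.linearMap_qext
    apply TensorProduct.ext'
    intro m n
    rw [LinearMap.comp_apply, LinearMap.comp_apply, hf, hg, LinearMap.comp_apply,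
      LinearMap.id_apply]
  refine ⟨?_, LinearEquiv.ofLinear f g hfg hgf, ?_, ?_⟩
  · have h0 : T.br = 0 := by
      apply Submodule.linearMap_qext
      apply TensorProduct.ext'
      intro m n
      apply Submodule.linearMap_qext
      apply TensorProduct.ext'
      intro m' n'
      have := hbr m n m' n'
      rw [htrivNM, TensorProduct.zero_tmul, map_zero, neg_zero] at this
      exact this
    intro s t
    rw [h0]; rfl
  · intro m n
    exact hf m n
  · intro m n
    rw [hα]
    exact hf _ _
end

section
/- Let 0 → (M₁, α_{M₁}) →f (M₂, α_{M₂}) →g (M₃, α_{M₃}) → 0 be a short exact sequence of Hom-Lie algebras, and let (N, α_N) be a Hom-Lie algebra with compatible Hom-actions of (N, α_N) and each (M_i, α_{M_i}) (i = 1,2,3) on each other, such that f and g preserve these Hom-actions (f(ⁿm) = ⁿf(m), ^{m}n = ^{f(m)}n, and similarly for g). Then the induced sequence of Hom-Lie algebras (M₁⋆N, α_{M₁⋆N}) →^{f⋆id_N} (M₂⋆N, α_{M₂⋆N}) →^{g⋆id_N} (M₃⋆N, α_{M₃⋆N}) → 0 is exact: g⋆id_N is surjective and Ker(g⋆id_N)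 = Im(f⋆id_N). -/
open TensorProduct

/-- Given a short exact sequence `0 → M₁ →f M₂ →g M₃ → 0` of Hom-Lie
algebras and a Hom-Lie algebra `(N, α_N)` with compatible Hom-actions on and by each `Mᵢ`,
preserved by `f` and `g`, the induced sequence
`M₁⋆N → M₂⋆N → M₃⋆N → 0` of Hom-Lie tensor products is exact:
`g⋆id_N` is surjective and `Ker(g⋆id_N) = Im(f⋆id_N)`. -/
theorem statement7 {K M₁ M₂ M₃ N : Type} [Field K]
    [AddCommGroup M₁] [Module K M₁] [AddCommGroup M₂] [Module K M₂]
    [AddCommGroup M₃] [Module K M₃] [AddCommGroup N] [Module K N]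
    (H₁ : HomLieStr K M₁) (H₂ : HomLieStr K M₂) (H₃ : HomLieStr K M₃)
    (HN : HomLieStr K N)
    (a1N : HomAction H₁ HN) (aN1 : HomAction HN H₁)
    (a2N : HomAction H₂ HN) (aN2 : HomAction HN H₂)
    (a3N : HomAction H₃ HN) (aN3 : HomAction HN H₃)
    (hc1 : Compatible a1N aN1) (hc2 : Compatible a2N aN2) (hc3 : Compatible a3N aN3)
    (f : M₁ →ₗ[K] M₂) (g : M₂ →ₗ[K] M₃)
    (hf : IsHomLieHom H₁ H₂ f) (hg : IsHomLieHom H₂ H₃ g)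
    (hfinj : Function.Injective f) (hgsurj : Function.Surjective g)
    (hexact : LinearMap.range f = LinearMap.ker g)
    -- f and g preserve the Hom-actions
    (hfN : ∀ n m, f (aN1.act n m) = aN2.act n (f m))
    (hfN' : ∀ m n, a1N.act m n = a2N.act (f m) n)
    (hgN : ∀ n m, g (aN2.act n m) = aN3.act n (g m))
    (hgN' : ∀ m n, a2N.act m n = a3N.act (g m) n)
    -- the functorial homomorphisms f⋆id_N and g⋆id_N
    (F : ((M₁ ⊗[K] N) ⧸ Dsub H₁.br H₁.α HN.br HN.α a1N.act aN1.act) →ₗ[K]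
         ((M₂ ⊗[K] N) ⧸ Dsub H₂.br H₂.α HN.br HN.α a2N.act aN2.act))
    (hF : ∀ m n, F ((Dsub H₁.br H₁.α HN.br HN.α a1N.act aN1.act).mkQ (m ⊗ₜ[K] n)) =
        (Dsub H₂.br H₂.α HN.br HN.α a2N.act aN2.act).mkQ (f m ⊗ₜ[K] n))
    (G : ((M₂ ⊗[K] N) ⧸ Dsub H₂.br H₂.α HN.br HN.α a2N.act aN2.act) →ₗ[K]
         ((M₃ ⊗[K] N) ⧸ Dsub H₃.br H₃.α HN.br HN.α a3N.act aN3.act))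
    (hG : ∀ m n, G ((Dsub H₂.br H₂.α HN.br HN.α a2N.act aN2.act).mkQ (m ⊗ₜ[K] n)) =
        (Dsub H₃.br H₃.α HN.br HN.α a3N.act aN3.act).mkQ (g m ⊗ₜ[K] n)) :
    Function.Surjective G ∧ LinearMap.ker G = LinearMap.range F := by
  have hF' : ∀ t, F ((Dsub H₁.br H₁.α HN.br HN.α a1N.act aN1.act).mkQ t) =
      (Dsub H₂.br H₂.α HN.br HN.α a2N.act aN2.act).mkQ (f.rTensor N t) := by
    intro t
    induction t using TensorProduct.induction_on with
    | zero => simp only [map_zero]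
    | tmul m n => rw [hF, LinearMap.rTensor_tmul]
    | add x y hx hy => simp only [map_add, hx, hy]
  have hG' : ∀ t, G ((Dsub H₂.br H₂.α HN.br HN.α a2N.act aN2.act).mkQ t) =
      (Dsub H₃.br H₃.α HN.br HN.α a3N.act aN3.act).mkQ (g.rTensor N t) := by
    intro t
    induction t using TensorProduct.induction_on with
    | zero => simp only [map_zero]
    | tmul m n => rw [hG, LinearMap.rTensor_tmul]
    | add x y hx hy => simp only [map_add, hx, hy]
  have hex : Function.Exact f g := LinearMap.exact_iff.mpr hexact.symm
  have hexT : Function.Exact (f.rTensor N) (g.rTensor N) := rTensor_exact N hex hgsurj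
  have hsT : Function.Surjective (g.rTensor N) := LinearMap.rTensor_surjective N hgsurj
  have hD : Dsub H₃.br H₃.α HN.br HN.α a3N.act aN3.act ≤
      (Dsub H₂.br H₂.α HN.br HN.α a2N.act aN2.act).map (g.rTensor N) := by
    unfold Dsub
    rw [Submodule.span_le]
    rintro x ((((⟨m, m', n, rfl⟩ | ⟨m, n, n', rfl⟩) | ⟨m, n, rfl⟩) | ⟨m, m', n, n', rfl⟩) |
      ⟨m, m', m'', n, n', n'', rfl⟩)
    · obtain ⟨m, rfl⟩ := hgsurj m
      obtain ⟨m', rfl⟩ := hgsurj m'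
      refine ⟨_, Submodule.subset_span (Or.inl (Or.inl (Or.inl (Or.inl ⟨m, m', n, rfl⟩)))), ?_⟩
      simp only [map_add, map_sub, LinearMap.rTensor_tmul, hg.1, hg.2, hgN, hgN']
    · obtain ⟨m, rfl⟩ := hgsurj m
      refine ⟨_, Submodule.subset_span (Or.inl (Or.inl (Or.inl (Or.inr ⟨m, n, n', rfl⟩)))), ?_⟩
      simp only [map_add, map_sub, LinearMap.rTensor_tmul, hg.2, hgN]
    · obtain ⟨m, rfl⟩ := hgsurj m
      refine ⟨_, Submodule.subset_span (Or.inl (Or.inl (Or.inr ⟨m, n, rfl⟩))), ?_⟩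
      simp only [LinearMap.rTensor_tmul, hgN, hgN']
    · obtain ⟨m, rfl⟩ := hgsurj m
      obtain ⟨m', rfl⟩ := hgsurj m'
      refine ⟨_, Submodule.subset_span (Or.inl (Or.inr ⟨m, m', n, n', rfl⟩)), ?_⟩
      simp only [map_add, LinearMap.rTensor_tmul, hgN, hgN']
    · obtain ⟨m, rfl⟩ := hgsurj m
      obtain ⟨m', rfl⟩ := hgsurj m'
      obtain ⟨m'', rfl⟩ := hgsurj m''
      refine ⟨_, Submodule.subset_span (Or.inr ⟨m, m', m'', n, n', n'', rfl⟩), ?_⟩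
      simp only [map_add, LinearMap.rTensor_tmul, hg.1, hgN, hgN']
  refine ⟨?_, le_antisymm ?_ ?_⟩
  · intro y
    obtain ⟨t, rfl⟩ := Submodule.mkQ_surjective _ y
    obtain ⟨s, rfl⟩ := hsT t
    exact ⟨_, hG' s⟩
  · intro x hx
    obtain ⟨t, rfl⟩ := Submodule.mkQ_surjective _ x
    rw [LinearMap.mem_ker, hG', Submodule.mkQ_apply, Submodule.Quotient.mk_eq_zero] at hx
    obtain ⟨d, hd, hdt⟩ := hD hx
    obtain ⟨s, hs⟩ := (hexT (t - d)).mp (by rw [map_sub, hdt, sub_self])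
    refine ⟨(Dsub H₁.br H₁.α HN.br HN.α a1N.act aN1.act).mkQ s, ?_⟩
    rw [hF', hs, map_sub, sub_eq_self, Submodule.mkQ_apply, Submodule.Quotient.mk_eq_zero]
    exact hd
  · rintro _ ⟨y, rfl⟩
    obtain ⟨s, rfl⟩ := Submodule.mkQ_surjective _ y
    rw [LinearMap.mem_ker, hF', hG', hexT.apply_apply_eq_zero, map_zero]
end

section
/- Let (M, α_M) and (N, α_N) be Hom-Lie algebras with compatible Hom-actions on each other. Then the formula ^{m'}(m⋆n) = [m',m] ⋆ α_N(n) + α_M(m) ⋆ (^{m'}n) defines a Hom-action of (M, α_M) on the Hom-Lie tensor product (M⋆N, α_{M⋆N}), and the formula ^{n'}(m⋆n) = (^{n'}m) ⋆ α_N(n) + α_M(m) ⋆ [n',n] defines a Hom-action of (N, α_N) on (M⋆N, α_{M⋆N}). -/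
open TensorProduct

theorem ext_star {K M N P : Type} [Field K] [AddCommGroup M] [Module K M]
    [AddCommGroup N] [Module K N] [AddCommGroup P] [Module K P] {D : Submodule K (M ⊗[K] N)}
    {f g : ((M ⊗[K] N) ⧸ D) →ₗ[K] P}
    (h : ∀ m n, f (D.mkQ (m ⊗ₜ[K] n)) = g (D.mkQ (m ⊗ₜ[K] n))) : f = g := by
  apply Submodule.linearMap_qext
  apply TensorProduct.ext'
  exact h

theorem exists_lift {K M N X : Type} [Field K] [AddCommGroup M] [Module K M]
    [AddCommGroup N] [Module K N] [AddCommGroup X] [Module K X] (D : Submodule K (M ⊗[K] N))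
    (F : X →ₗ[K] (M ⊗[K] N) →ₗ[K] ((M ⊗[K] N) ⧸ D)) (h : ∀ x, D ≤ LinearMap.ker (F x)) :
    ∃ G : X →ₗ[K] ((M ⊗[K] N) ⧸ D) →ₗ[K] ((M ⊗[K] N) ⧸ D),
      ∀ x t, G x (D.mkQ t) = F x t :=
  ⟨{ toFun := fun x => D.liftQ (F x) (h x)
     map_add' := fun x y => by
       apply Submodule.linearMap_qext; ext; simp
     map_smul' := fun c x => by
       apply Submodule.linearMap_qext; ext; simp }, fun x t => by simp⟩

/-- Let `(M, α_M)` and `(N, α_N)` be Hom-Lie algebras with compatible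
Hom-actions on each other.  Then `^{m'}(m⋆n) = [m',m]⋆α_N(n) + α_M(m)⋆(^{m'}n)` defines a
Hom-action of `(M, α_M)` on the Hom-Lie tensor product `(M⋆N, α_{M⋆N})`, and
`^{n'}(m⋆n) = (^{n'}m)⋆α_N(n) + α_M(m)⋆[n',n]` defines a Hom-action of `(N, α_N)` on
`(M⋆N, α_{M⋆N})`. -/
theorem statement10 {K M N : Type} [Field K] [AddCommGroup M] [Module K M]
    [AddCommGroup N] [Module K N] (HM : HomLieStr K M) (HN : HomLieStr K N)
    (aMN : HomAction HM HN) (aNM : HomAction HN HM)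
    (hcomp : Compatible aMN aNM)
    (D : Submodule K (M ⊗[K] N)) (T : HomLieStr K ((M ⊗[K] N) ⧸ D))
    (hT : IsStarStruct HM HN aMN aNM D T) :
    (∃ aM : HomAction HM T, ∀ (m' m : M) (n : N),
      aM.act m' (D.mkQ (m ⊗ₜ[K] n)) =
        D.mkQ (HM.br m' m ⊗ₜ[K] HN.α n) + D.mkQ (HM.α m ⊗ₜ[K] aMN.act m' n)) ∧
    (∃ aN : HomAction HN T, ∀ (n' : N) (m : M) (n : N),
      aN.act n' (D.mkQ (m ⊗ₜ[K] n)) =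
        D.mkQ (aNM.act n' m ⊗ₜ[K] HN.α n) + D.mkQ (HM.α m ⊗ₜ[K] HN.br n' n)) := by
  obtain ⟨hD, hbr, hα⟩ := hT
  obtain ⟨c1, c2⟩ := hcomp
  have mem : ∀ {t}, t ∈ Dsub HM.br HM.α HN.br HN.α aMN.act aNM.act → D.mkQ t = 0 := by
    intro t ht
    rw [← hD] at ht
    simpa using ht
  have ra : ∀ m m' n, D.mkQ (HM.br m m' ⊗ₜ[K] HN.α n) =
      D.mkQ (HM.α m ⊗ₜ[K] aMN.act m' n) - D.mkQ (HM.α m' ⊗ₜ[K] aMN.act m n) := by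
    intro m m' n
    have := mem (Submodule.subset_span (Or.inl (Or.inl (Or.inl (Or.inl ⟨m, m', n, rfl⟩)))))
    rw [map_add, map_sub] at this
    rw [← sub_eq_zero, ← this]; abel
  have rb : ∀ m n n', D.mkQ (HM.α m ⊗ₜ[K] HN.br n n') =
      D.mkQ (aNM.act n' m ⊗ₜ[K] HN.α n) - D.mkQ (aNM.act n m ⊗ₜ[K] HN.α n') := by
    intro m n n'
    have := mem (Submodule.subset_span (Or.inl (Or.inl (Or.inl (Or.inr ⟨m, n, n', rfl⟩)))))
    rw [map_add, map_sub] at this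
    rw [← sub_eq_zero, ← this]; abel
  constructor
  · let F : M →ₗ[K] (M ⊗[K] N) →ₗ[K] ((M ⊗[K] N) ⧸ D) :=
      ((LinearMap.lcomp K _ (TensorProduct.lift aMN.act)).comp
        ((LinearMap.compr₂ (TensorProduct.mk K M N) D.mkQ).comp HM.α))
    have hF : ∀ x m n, F x (m ⊗ₜ n) = D.mkQ (HM.α x ⊗ₜ aMN.act m n) := fun x m n => by simp [F]
    have hF0 : ∀ x, D ≤ LinearMap.ker (F x) := by
      intro x
      conv_lhs => rw [hD]
      refine Submodule.span_le.2 ?_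
      have key : ∀ y : N, y = 0 → D.mkQ (HM.α x ⊗ₜ[K] y) = 0 := by
        rintro y rfl; simp
      rintro t ((((⟨m, m', n, rfl⟩ | ⟨m, n, n', rfl⟩) | ⟨m, n, rfl⟩) | ⟨m, m', n, n', rfl⟩) |
        ⟨m, m', m'', n, n', n'', rfl⟩) <;>
      simp only [SetLike.mem_coe, LinearMap.mem_ker, map_add, map_sub, hF] <;>
      try simp only [← map_add, ← map_sub, ← TensorProduct.tmul_add, ← TensorProduct.tmul_sub]
      · apply key; rw [aMN.ax1]; abel
      · apply key; rw [aMN.ax2, c2, c2, HN.skew (aMN.act m n)]; abel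
      · rw [c2, rb, sub_self]
      · apply key; rw [c2, c2, HN.skew (aMN.act m' n')]; abel
      · apply key
        have h : ∀ m m' m'' n n' n'', aMN.act (HM.br (aNM.act n m) (aNM.act n' m'))
            (HN.α (aMN.act m'' n'')) =
            HN.br (HN.α (aMN.act m n)) (HN.br (aMN.act m' n') (aMN.act m'' n'')) +
            HN.br (HN.α (aMN.act m' n')) (HN.br (aMN.act m'' n'') (aMN.act m n)) := by
          intro m m' m'' n n' n''
          rw [aMN.ax1, c2, c2, aNM.ax3, aNM.ax3, c2, c2, ← aMN.ax3, ← aMN.ax3,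
            HN.skew _ (HN.α (aMN.act m n)), HN.skew _ (HN.α (aMN.act m' n')),
            HN.skew (aMN.act m'' n'') (aMN.act m' n')]
          simp only [map_neg]; abel
        rw [h, h, h]
        have J := HN.jacobi (aMN.act m n) (aMN.act m' n') (aMN.act m'' n'')
        rw [← add_zero (0 : N)]
        nth_rewrite 1 [← J]
        rw [← J]; abel
    obtain ⟨G, hG⟩ := exists_lift D F hF0
    have hG' : ∀ x m n, G x (D.mkQ (m ⊗ₜ n)) = D.mkQ (HM.α x ⊗ₜ aMN.act m n) :=
      fun x m n => by rw [hG, hF]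
    refine ⟨⟨G, ?_, ?_, ?_⟩, ?_⟩
    · intro x y t
      suffices h : (G (HM.br x y)).comp T.α = (G (HM.α x)).comp (G y) - (G (HM.α y)).comp (G x) from
        LinearMap.congr_fun h t
      apply ext_star
      intro m n
      simp only [LinearMap.comp_apply, LinearMap.sub_apply, hα, hG']
      rw [HM.αbr, ← aMN.ax3, ra]
    · intro x t t'
      suffices h : T.br.compr₂ (G (HM.α x)) =
          (T.br.compl₂ T.α).comp (G x) + (T.br.compl₂ (G x)).comp T.α from
        LinearMap.congr_fun (LinearMap.congr_fun h t) t'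
      apply ext_star
      intro m n
      apply ext_star
      intro m' n'
      simp only [LinearMap.comp_apply, LinearMap.add_apply, LinearMap.compr₂_apply,
        LinearMap.compl₂_apply, hα, hG', hbr, map_neg]
      rw [c1, ← aMN.ax3, ra, ← aNM.ax3]; abel
    · intro x t
      suffices h : T.α.comp (G x) = (G (HM.α x)).comp T.α from LinearMap.congr_fun h t
      apply ext_star
      intro m n
      simp only [LinearMap.comp_apply, hα, hG', aMN.ax3]
    · intro x m n
      change G x _ = _
      rw [hG', ra]; abel
  · let F : N →ₗ[K] (M ⊗[K] N) →ₗ[K] ((M ⊗[K] N) ⧸ D) :=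
      ((LinearMap.lcomp K _ (TensorProduct.lift aNM.act.flip)).comp
        ((LinearMap.compr₂ (TensorProduct.mk K M N) D.mkQ).flip.comp HN.α))
    have hF : ∀ x m n, F x (m ⊗ₜ n) = D.mkQ (aNM.act n m ⊗ₜ HN.α x) := fun x m n => by simp [F]
    have hF0 : ∀ x, D ≤ LinearMap.ker (F x) := by
      intro x
      conv_lhs => rw [hD]
      refine Submodule.span_le.2 ?_
      have key : ∀ y : M, y = 0 → D.mkQ (y ⊗ₜ[K] HN.α x) = 0 := by
        rintro y rfl; simp
      rintro t ((((⟨m, m', n, rfl⟩ | ⟨m, n, n', rfl⟩) | ⟨m, n, rfl⟩) | ⟨m, m', n, n', rfl⟩) |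
        ⟨m, m', m'', n, n', n'', rfl⟩) <;>
      simp only [SetLike.mem_coe, LinearMap.mem_ker, map_add, map_sub, hF] <;>
      try simp only [← map_add, ← map_sub, ← TensorProduct.add_tmul, ← TensorProduct.sub_tmul]
      · apply key; rw [aNM.ax2, c1, c1, HM.skew (aNM.act n m)]; abel
      · apply key; rw [aNM.ax1]; abel
      · rw [c1, ra, sub_self]
      · apply key; rw [c1, c1, HM.skew (aNM.act n' m')]; abel
      · apply key
        have h : ∀ m m' m'' n n' n'', aNM.act (HN.α (aMN.act m'' n''))
            (HM.br (aNM.act n m) (aNM.act n' m')) =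
            - HM.br (HM.α (aNM.act n'' m'')) (HM.br (aNM.act n m) (aNM.act n' m')) := by
          intro m m' m'' n n' n''
          rw [aMN.ax3, c1, ← aNM.ax3, HM.skew]
        rw [h, h, h, ← neg_zero, ← HM.jacobi (aNM.act n m) (aNM.act n' m') (aNM.act n'' m'')]
        abel
    obtain ⟨G, hG⟩ := exists_lift D F hF0
    have hG' : ∀ x m n, G x (D.mkQ (m ⊗ₜ n)) = D.mkQ (aNM.act n m ⊗ₜ HN.α x) :=
      fun x m n => by rw [hG, hF]
    refine ⟨⟨G, ?_, ?_, ?_⟩, ?_⟩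
    · intro x y t
      suffices h : (G (HN.br x y)).comp T.α = (G (HN.α x)).comp (G y) - (G (HN.α y)).comp (G x) from
        LinearMap.congr_fun h t
      apply ext_star
      intro m n
      simp only [LinearMap.comp_apply, LinearMap.sub_apply, hα, hG']
      rw [HN.αbr, ← aNM.ax3, rb]
    · intro x t t'
      suffices h : T.br.compr₂ (G (HN.α x)) =
          (T.br.compl₂ T.α).comp (G x) + (T.br.compl₂ (G x)).comp T.α from
        LinearMap.congr_fun (LinearMap.congr_fun h t) t'
      apply ext_star
      intro m n
      apply ext_star
      intro m' n'
      simp only [LinearMap.comp_apply, LinearMap.add_apply, LinearMap.compr₂_apply,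
        LinearMap.compl₂_apply, hα, hG', hbr, map_neg]
      rw [c2 n' m', ← aNM.ax3, rb, ← aMN.ax3]; abel
    · intro x t
      suffices h : T.α.comp (G x) = (G (HN.α x)).comp T.α from LinearMap.congr_fun h t
      apply ext_star
      intro m n
      simp only [LinearMap.comp_apply, hα, hG', aNM.ax3]
    · intro x m n
      change G x _ = _
      rw [hG', rb]; abel
end

section
/- Let (M, α_M) and (N, α_N) be Hom-Lie algebras with compatible Hom-actions on each other, and let ψ_M : M⋆N → M, m⋆n ↦ −(ⁿm), and ψ_N : M⋆N → N, m⋆n ↦ ᵐn, be the induced homomorphisms. Then Ker(ψ_M) and Ker(ψ_N) are contained in the center Z(M⋆N) = { t ∈ M⋆N : [t, s] = 0 for all s ∈ M⋆N } of the Hom-Lie tensor product (M⋆N, α_{M⋆N}). -/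
open TensorProduct

/-- Let `(M, α_M)` and `(N, α_N)` be Hom-Lie algebras with compatible
Hom-actions on each other, and let `ψ_M : M⋆N → M`, `m⋆n ↦ −(ⁿm)`, and
`ψ_N : M⋆N → N`, `m⋆n ↦ ᵐn`, be the induced homomorphisms.  Then `Ker(ψ_M)` and
`Ker(ψ_N)` are contained in the center of `(M⋆N, α_{M⋆N})`. -/
theorem statement11 {K M N : Type} [Field K] [AddCommGroup M] [Module K M]
    [AddCommGroup N] [Module K N] (HM : HomLieStr K M) (HN : HomLieStr K N)
    (aMN : HomAction HM HN) (aNM : HomAction HN HM)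
    (hcomp : Compatible aMN aNM)
    (D : Submodule K (M ⊗[K] N)) (T : HomLieStr K ((M ⊗[K] N) ⧸ D))
    (hT : IsStarStruct HM HN aMN aNM D T)
    (ψM : ((M ⊗[K] N) ⧸ D) →ₗ[K] M)
    (hψM : ∀ m n, ψM (D.mkQ (m ⊗ₜ[K] n)) = - aNM.act n m)
    (ψN : ((M ⊗[K] N) ⧸ D) →ₗ[K] N)
    (hψN : ∀ m n, ψN (D.mkQ (m ⊗ₜ[K] n)) = aMN.act m n) :
    (∀ t, ψM t = 0 → ∀ s, T.br t s = 0) ∧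
    (∀ t, ψN t = 0 → ∀ s, T.br t s = 0) := by
  have key : ∀ t s, T.br t s = D.mkQ (ψM t ⊗ₜ[K] ψN s) := by
    intro t s
    obtain ⟨t, rfl⟩ := D.mkQ_surjective t
    obtain ⟨s, rfl⟩ := D.mkQ_surjective s
    induction t using TensorProduct.induction_on with
    | zero => simp only [map_zero, LinearMap.zero_apply, TensorProduct.zero_tmul]
    | add x y hx hy =>
      simp only [map_add, LinearMap.add_apply, TensorProduct.add_tmul, hx, hy]
    | tmul m n =>
      induction s using TensorProduct.induction_on with
      | zero => simp only [map_zero, TensorProduct.tmul_zero]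
      | add x y hx hy => simp only [map_add, TensorProduct.tmul_add, hx, hy]
      | tmul m' n' =>
        rw [hT.2.1, hψM, hψN, TensorProduct.neg_tmul, map_neg]
  refine ⟨fun t ht s => ?_, fun t ht s => ?_⟩
  · rw [key, ht, TensorProduct.zero_tmul, map_zero]
  · rw [T.skew, key, ht, TensorProduct.tmul_zero, map_zero, neg_zero]
end

section
/- Let (M, α_M) be an ideal of a perfect Hom-Lie algebra (L, α_L) (i.e. L = [L,L]), with M and L acting on each other via the bracket of L. Then there is an exact sequence of vector spaces Ker(ψ_M : M⋆L → M) → H₂^α(L) → H₂^α(L/M) → M/[L,M] → 0, where ψ_M(m⋆l) = −(ˡm) = [m,l], the first two maps are induced by the inclusion M ↪ L and the projection L → L/M respectively, and the last map sends the class of a 2-cycle to the corresponding class in M/[L,M]. -/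
open TensorProduct

/-- The wedge `v₀ ∧ … ∧ v_{n-1}` as an element of the `n`-th exterior power `⋀[K]^n L`. -/
def wedge {K L : Type} [Field K] [AddCommGroup L] [Module K L] (n : ℕ) (v : Fin n → L) :
    ↥(⋀[K]^n L) :=
  ⟨ExteriorAlgebra.ιMulti K n v, ExteriorAlgebra.ιMulti_range K n ⟨v, rfl⟩⟩

theorem wedge_span2 {K L : Type} [Field K] [AddCommGroup L] [Module K L]
    (P : Submodule K (⋀[K]^2 L)) (h : ∀ x y : L, wedge 2 ![x, y] ∈ P) (z : ⋀[K]^2 L) : z ∈ P := by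
  have hz : z ∈ Submodule.span K (Set.range (exteriorPower.ιMulti K 2 (M := L))) := by
    rw [exteriorPower.ιMulti_span]; trivial
  refine (Submodule.span_le.2 ?_) hz
  rintro _ ⟨v, rfl⟩
  have hv : v = ![v 0, v 1] := by
    funext i; fin_cases i <;> rfl
  have := h (v 0) (v 1)
  rw [← hv] at this
  exact this

theorem wedge_span3 {K L : Type} [Field K] [AddCommGroup L] [Module K L]
    (P : Submodule K (⋀[K]^3 L)) (h : ∀ x y t : L, wedge 3 ![x, y, t] ∈ P) (z : ⋀[K]^3 L) :
    z ∈ P := by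
  have hz : z ∈ Submodule.span K (Set.range (exteriorPower.ιMulti K 3 (M := L))) := by
    rw [exteriorPower.ιMulti_span]; trivial
  refine (Submodule.span_le.2 ?_) hz
  rintro _ ⟨v, rfl⟩
  have hv : v = ![v 0, v 1, v 2] := by
    funext i; fin_cases i <;> rfl
  have := h (v 0) (v 1) (v 2)
  rw [← hv] at this
  exact this

theorem wedge_add_left {K L : Type} [Field K] [AddCommGroup L] [Module K L] (x y z : L) :
    wedge (K := K) 2 ![x + y, z] = wedge 2 ![x, z] + wedge 2 ![y, z] := by
  have := (exteriorPower.ιMulti K 2 (M := L)).map_vecCons_add ![z] x y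
  exact this

theorem wedge_swap {K L : Type} [Field K] [AddCommGroup L] [Module K L] (x y : L) :
    wedge (K := K) 2 ![x, y] = - wedge 2 ![y, x] := by
  have := (exteriorPower.ιMulti K 2 (M := L)).map_swap ![y, x] (i := 0) (j := 1) (by decide)
  have e : (![y, x] ∘ (Equiv.swap (0 : Fin 2) 1)) = ![x, y] := by
    funext i; fin_cases i <;> simp
  rw [e] at this
  exact this

theorem map_wedge {K L N : Type} [Field K] [AddCommGroup L] [Module K L]
    [AddCommGroup N] [Module K N] (f : L →ₗ[K] N) (x y : L) :
    exteriorPower.map 2 f (wedge 2 ![x, y]) = wedge 2 ![f x, f y] := by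
  have := exteriorPower.map_apply_ιMulti (n := 2) f ![x, y]
  have e : (f ∘ ![x, y]) = ![f x, f y] := by
    funext i; fin_cases i <;> rfl
  rw [e] at this
  exact this

set_option maxHeartbeats 2000000 in
/-- Let `(M, α_M)` (the submodule `Ms`) be an ideal of a perfect Hom-Lie
algebra `(L, α_L)`, with `M` and `L` acting on each other via the bracket of `L`.  Then
there is an exact sequence of vector spaces
`Ker(ψ_M : M⋆L → M) → H₂^α(L) → H₂^α(L/M) → M/[L,M] → 0`,
with `ψ_M(m⋆l) = [m,l]`, the first two maps induced by the inclusion `M ↪ L` and the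
projection `L → L/M`, and the last map sending the class of a 2-cycle to the
corresponding class in `M/[L,M]`.  Here `H₂^α(L) = Ker(d₂)/Im(d₃)` is realized as the
kernel of the map `Λ²L/Im(d₃) → L` induced by `d₂`, where `d₂(x∧y) = −[x,y]` and
`d₃(x∧y∧z) = −[x,y]∧α(z) + [x,z]∧α(y) − [y,z]∧α(x)`. -/
theorem statement12 {K L : Type} [Field K] [AddCommGroup L] [Module K L]
    (HL : HomLieStr K L)
    (hperf : Submodule.span K {z | ∃ x y, z = HL.br x y} = ⊤)
    (Ms : Submodule K L)
    (hideal : (∀ x ∈ Ms, HL.α x ∈ Ms) ∧ (∀ x ∈ Ms, ∀ y : L, HL.br x y ∈ Ms))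
    (HM : HomLieStr K Ms)
    (hHM : (∀ x y : Ms, (HM.br x y : L) = HL.br x y) ∧ (∀ x : Ms, (HM.α x : L) = HL.α x))
    (HQ : HomLieStr K (L ⧸ Ms))
    (hHQ : (∀ x y : L, HQ.br (Ms.mkQ x) (Ms.mkQ y) = Ms.mkQ (HL.br x y)) ∧
           (∀ x : L, HQ.α (Ms.mkQ x) = Ms.mkQ (HL.α x)))
    (aML : HomAction HM HL) (haML : ∀ (m : Ms) (l : L), aML.act m l = HL.br (m : L) l)
    (aLM : HomAction HL HM) (haLM : ∀ (l : L) (m : Ms), (aLM.act l m : L) = HL.br l (m : L))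
    -- ψ_M : M⋆L → M, m⋆l ↦ −(ˡm) = [m,l]
    (ψM : ((Ms ⊗[K] L) ⧸ Dsub HM.br HM.α HL.br HL.α aML.act aLM.act) →ₗ[K] Ms)
    (hψM : ∀ (m : Ms) (l : L),
        (ψM ((Dsub HM.br HM.α HL.br HL.α aML.act aLM.act).mkQ (m ⊗ₜ[K] l)) : L) =
        HL.br (m : L) l)
    -- the boundary maps of the Hom-Chevalley-Eilenberg complexes of L and of L/M
    (d₂L : ↥(⋀[K]^2 L) →ₗ[K] L)
    (hd₂L : ∀ x y : L, d₂L (wedge 2 ![x, y]) = - HL.br x y)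
    (d₃L : ↥(⋀[K]^3 L) →ₗ[K] ↥(⋀[K]^2 L))
    (hd₃L : ∀ x y z : L, d₃L (wedge 3 ![x, y, z]) =
        - wedge 2 ![HL.br x y, HL.α z] + wedge 2 ![HL.br x z, HL.α y]
          - wedge 2 ![HL.br y z, HL.α x])
    (d₂Q : ↥(⋀[K]^2 (L ⧸ Ms)) →ₗ[K] (L ⧸ Ms))
    (hd₂Q : ∀ x y : L ⧸ Ms, d₂Q (wedge 2 ![x, y]) = - HQ.br x y)
    (d₃Q : ↥(⋀[K]^3 (L ⧸ Ms)) →ₗ[K] ↥(⋀[K]^2 (L ⧸ Ms)))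
    (hd₃Q : ∀ x y z : L ⧸ Ms, d₃Q (wedge 3 ![x, y, z]) =
        - wedge 2 ![HQ.br x y, HQ.α z] + wedge 2 ![HQ.br x z, HQ.α y]
          - wedge 2 ![HQ.br y z, HQ.α x])
    -- the maps Λ²L/Im(d₃) → L and Λ²(L/M)/Im(d₃) → L/M induced by d₂;
    -- their kernels realize H₂^α(L) and H₂^α(L/M)
    (d₂Lbar : (↥(⋀[K]^2 L) ⧸ LinearMap.range d₃L) →ₗ[K] L)
    (hd₂Lbar : ∀ z, d₂Lbar ((LinearMap.range d₃L).mkQ z) = d₂L z)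
    (d₂Qbar : (↥(⋀[K]^2 (L ⧸ Ms)) ⧸ LinearMap.range d₃Q) →ₗ[K] (L ⧸ Ms))
    (hd₂Qbar : ∀ z, d₂Qbar ((LinearMap.range d₃Q).mkQ z) = d₂Q z)
    -- the map Λ²(L) → Λ²(L/M) induced by the projection
    (Λπ : ↥(⋀[K]^2 L) →ₗ[K] ↥(⋀[K]^2 (L ⧸ Ms)))
    (hΛπ : ∀ x y : L, Λπ (wedge 2 ![x, y]) = wedge 2 ![Ms.mkQ x, Ms.mkQ y])
    -- the linear map M ⊗ L → Λ²L, m ⊗ l ↦ m ∧ l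
    (g : (Ms ⊗[K] L) →ₗ[K] ↥(⋀[K]^2 L))
    (hg : ∀ (m : Ms) (l : L), g (m ⊗ₜ[K] l) = wedge 2 ![(m : L), l])
    -- the maps of the four-term sequence
    (f₁ : ↥(LinearMap.ker ψM) →ₗ[K] ↥(LinearMap.ker d₂Lbar))
    (hf₁ : ∀ (s : Ms ⊗[K] L)
        (hs : (Dsub HM.br HM.α HL.br HL.α aML.act aLM.act).mkQ s ∈ LinearMap.ker ψM)
        (hc : (LinearMap.range d₃L).mkQ (g s) ∈ LinearMap.ker d₂Lbar),
        f₁ ⟨(Dsub HM.br HM.α HL.br HL.α aML.act aLM.act).mkQ s, hs⟩ =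
          ⟨(LinearMap.range d₃L).mkQ (g s), hc⟩)
    (f₂ : ↥(LinearMap.ker d₂Lbar) →ₗ[K] ↥(LinearMap.ker d₂Qbar))
    (hf₂ : ∀ (z : ↥(⋀[K]^2 L)) (hz : (LinearMap.range d₃L).mkQ z ∈ LinearMap.ker d₂Lbar)
        (hz' : (LinearMap.range d₃Q).mkQ (Λπ z) ∈ LinearMap.ker d₂Qbar),
        f₂ ⟨(LinearMap.range d₃L).mkQ z, hz⟩ = ⟨(LinearMap.range d₃Q).mkQ (Λπ z), hz'⟩)
    (f₃ : ↥(LinearMap.ker d₂Qbar) →ₗ[K]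
          (↥Ms ⧸ Submodule.comap Ms.subtype
            (Submodule.span K {x | ∃ l : L, ∃ m ∈ Ms, x = HL.br l m})))
    (hf₃ : ∀ (w : ↥(⋀[K]^2 L))
        (h1 : (LinearMap.range d₃Q).mkQ (Λπ w) ∈ LinearMap.ker d₂Qbar)
        (h2 : - d₂L w ∈ Ms),
        f₃ ⟨(LinearMap.range d₃Q).mkQ (Λπ w), h1⟩ =
          Submodule.Quotient.mk ⟨- d₂L w, h2⟩) :
    LinearMap.range f₁ = LinearMap.ker f₂ ∧
    LinearMap.range f₂ = LinearMap.ker f₃ ∧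
    Function.Surjective f₃ := by
  obtain ⟨σ, hσ⟩ := Ms.mkQ.exists_rightInverse_of_surjective
    (LinearMap.range_eq_top.2 (Submodule.mkQ_surjective Ms))
  have hσ' : ∀ q, Ms.mkQ (σ q) = q := fun q => LinearMap.congr_fun hσ q
  have hgm : ∀ m ∈ Ms, ∀ l : L, wedge 2 ![m, l] ∈ LinearMap.range g :=
    fun m hm l => ⟨(⟨m, hm⟩ : Ms) ⊗ₜ[K] l, hg _ _⟩
  have hΛg : ∀ s, Λπ (g s) = 0 := by
    intro s
    induction s with
    | zero => simp
    | add a b ha hb => rw [map_add, map_add, ha, hb, add_zero]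
    | tmul m l =>
      rw [hg, hΛπ]
      have h0 : Ms.mkQ (m : L) = 0 := by simp
      rw [h0]
      have := wedge_add_left (K := K) (0 : L ⧸ Ms) 0 (Ms.mkQ l)
      rw [add_zero] at this
      exact left_eq_add.1 this
  have hsec : ∀ z, z - exteriorPower.map 2 σ (Λπ z) ∈ LinearMap.range g := by
    intro z
    refine wedge_span2 ((LinearMap.range g).comap
      (LinearMap.id - (exteriorPower.map 2 σ) ∘ₗ Λπ)) ?_ z
    intro x y
    simp only [Submodule.mem_comap, LinearMap.sub_apply, LinearMap.id_apply, LinearMap.comp_apply]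
    rw [hΛπ, map_wedge]
    have hd : ∀ x, x - σ (Ms.mkQ x) ∈ Ms := by
      intro x
      have : Ms.mkQ (x - σ (Ms.mkQ x)) = 0 := by rw [map_sub, hσ', sub_self]
      exact (Submodule.Quotient.mk_eq_zero Ms).1 this
    have e1 := wedge_add_left (K := K) (x - σ (Ms.mkQ x)) (σ (Ms.mkQ x)) y
    have e2 := wedge_add_left (K := K) (y - σ (Ms.mkQ y)) (σ (Ms.mkQ y)) (σ (Ms.mkQ x))
    rw [sub_add_cancel] at e1 e2
    rw [e1, wedge_swap (σ (Ms.mkQ x)) y, e2, wedge_swap (σ (Ms.mkQ x)) (σ (Ms.mkQ y))]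
    have := sub_mem (hgm _ (hd x) y) (hgm _ (hd y) (σ (Ms.mkQ x)))
    convert this using 1
    abel
  have hker : ∀ z, Λπ z = 0 → ∃ s, g s = z := by
    intro z hz
    have := hsec z
    rw [hz, map_zero, sub_zero] at this
    exact this
  have hΛsurj : ∀ q, ∃ w, Λπ w = q := by
    intro q
    refine wedge_span2 (LinearMap.range Λπ) ?_ q
    intro x y
    exact ⟨wedge 2 ![σ x, σ y], by rw [hΛπ, hσ', hσ']⟩
  have hd3 : ∀ u, ∃ v, Λπ (d₃L v) = d₃Q u := by
    intro u
    refine wedge_span3 ((LinearMap.range (Λπ ∘ₗ d₃L)).comap d₃Q) ?_ u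
    intro x y t
    refine ⟨wedge 3 ![σ x, σ y, σ t], ?_⟩
    rw [LinearMap.comp_apply, hd₃L, hd₃Q, map_sub, map_add, map_neg, hΛπ, hΛπ, hΛπ]
    simp only [← hHQ.1, ← hHQ.2, hσ']
  have hd2 : ∀ w, d₂Q (Λπ w) = Ms.mkQ (d₂L w) := by
    intro w
    have := wedge_span2 (LinearMap.eqLocus (d₂Q ∘ₗ Λπ) (Ms.mkQ ∘ₗ d₂L)) ?_ w
    · exact this
    · intro x y
      rw [LinearMap.mem_eqLocus, LinearMap.comp_apply, LinearMap.comp_apply, hΛπ, hd₂Q, hd₂L,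
        hHQ.1, map_neg]
  have hψ : ∀ s, ((ψM ((Dsub HM.br HM.α HL.br HL.α aML.act aLM.act).mkQ s) : Ms) : L)
      = - d₂L (g s) := by
    intro s
    induction s with
    | zero => simp
    | add a b ha hb => rw [map_add, map_add, Submodule.coe_add, ha, hb, map_add, map_add, neg_add]
    | tmul m l => rw [hψM, hg, hd₂L, neg_neg]
  have hdd : ∀ v, d₂L (d₃L v) = 0 := by
    intro v
    rw [← hd₂Lbar]
    have : (LinearMap.range d₃L).mkQ (d₃L v) = 0 := by
      simp
    rw [this, map_zero]
  have hLM : ∀ x ∈ Submodule.span K {x | ∃ l : L, ∃ m ∈ Ms, x = HL.br l m},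
      ∃ s, d₂L (g s) = x := by
    intro x hx
    refine (Submodule.span_le (p := LinearMap.range (d₂L ∘ₗ g))).2 ?_ hx
    rintro _ ⟨l, m, hm, rfl⟩
    exact ⟨(⟨m, hm⟩ : Ms) ⊗ₜ[K] l, by
      rw [LinearMap.comp_apply, hg, hd₂L, ← HL.skew]⟩
  have hmk2 : ∀ z, d₂L z = 0 → (LinearMap.range d₃L).mkQ z ∈ LinearMap.ker d₂Lbar := by
    intro z hz
    rw [LinearMap.mem_ker, hd₂Lbar, hz]
  have hmkQ2 : ∀ z, d₂L z ∈ Ms → (LinearMap.range d₃Q).mkQ (Λπ z) ∈ LinearMap.ker d₂Qbar := by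
    intro z hz
    rw [LinearMap.mem_ker, hd₂Qbar, hd2]
    simpa using hz
  refine ⟨?_, ?_, ?_⟩
  · ext ⟨c, hc⟩
    constructor
    · rintro ⟨⟨t, ht⟩, h⟩
      obtain ⟨s, rfl⟩ := Submodule.mkQ_surjective _ t
      have h0 : d₂L (g s) = 0 := by
        have := hψ s
        rw [LinearMap.mem_ker.1 ht] at this
        simpa using this.symm
      rw [hf₁ s ht (hmk2 _ h0)] at h
      rw [← h, LinearMap.mem_ker, hf₂ (g s) _ (hmkQ2 _ (by rw [h0]; exact zero_mem _))]
      ext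
      simp only [hΛg, map_zero, Submodule.coe_zero]
    · intro h
      obtain ⟨z, rfl⟩ := Submodule.mkQ_surjective _ c
      have hz0 : d₂L z = 0 := by rw [← hd₂Lbar]; exact hc
      rw [LinearMap.mem_ker, hf₂ z _ (hmkQ2 _ (by rw [hz0]; exact zero_mem _))] at h
      have h' : (LinearMap.range d₃Q).mkQ (Λπ z) = 0 := congrArg Subtype.val h
      rw [← LinearMap.mem_ker, Submodule.ker_mkQ] at h'
      obtain ⟨u, hu⟩ := h'
      obtain ⟨v, hv⟩ := hd3 u
      obtain ⟨s, hs⟩ := hker (z - d₃L v) (by rw [map_sub, hv, hu, sub_self])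
      have h0 : d₂L (g s) = 0 := by rw [hs, map_sub, hz0, hdd, sub_zero]
      have hsk : (Dsub HM.br HM.α HL.br HL.α aML.act aLM.act).mkQ s ∈ LinearMap.ker ψM := by
        rw [LinearMap.mem_ker]
        ext
        rw [hψ, h0]; simp
      refine ⟨⟨_, hsk⟩, ?_⟩
      rw [hf₁ s hsk (hmk2 _ h0)]
      ext
      simp only [hs]
      rw [map_sub]
      simp
  · ext ⟨c, hc⟩
    constructor
    · rintro ⟨⟨t, ht⟩, h⟩
      obtain ⟨z, rfl⟩ := Submodule.mkQ_surjective _ t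
      have hz0 : d₂L z = 0 := by rw [← hd₂Lbar]; exact ht
      have hm : d₂L z ∈ Ms := by rw [hz0]; exact zero_mem _
      rw [hf₂ z _ (hmkQ2 _ hm)] at h
      rw [← h, LinearMap.mem_ker, hf₃ z _ (neg_mem hm), Submodule.Quotient.mk_eq_zero]
      simp [hz0]
    · intro h
      obtain ⟨q, rfl⟩ := Submodule.mkQ_surjective _ c
      obtain ⟨w, rfl⟩ := hΛsurj q
      have hm : d₂L w ∈ Ms := by
        have := hc
        rw [LinearMap.mem_ker, hd₂Qbar, hd2] at this
        simpa using this
      rw [LinearMap.mem_ker, hf₃ w _ (neg_mem hm), Submodule.Quotient.mk_eq_zero,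
        Submodule.mem_comap] at h
      obtain ⟨s, hs⟩ := hLM _ h
      have hs' : d₂L (g s) = - d₂L w := hs
      have hz0 : d₂L (w + g s) = 0 := by rw [map_add, hs', add_neg_cancel]
      refine ⟨⟨_, hmk2 _ hz0⟩, ?_⟩
      rw [hf₂ (w + g s) _ (hmkQ2 _ (by rw [hz0]; exact zero_mem _))]
      ext
      simp only [map_add, hΛg, add_zero]
  · intro c
    obtain ⟨⟨m, hm⟩, rfl⟩ := Submodule.mkQ_surjective _ c
    have : ∀ x : L, ∃ w, d₂L w = x := by
      intro x
      have hx : x ∈ Submodule.span K {z | ∃ x y, z = HL.br x y} := by rw [hperf]; trivial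
      refine (Submodule.span_le (p := LinearMap.range d₂L)).2 ?_ hx
      rintro _ ⟨a, b, rfl⟩
      exact ⟨wedge 2 ![b, a], by rw [hd₂L, ← HL.skew]⟩
    obtain ⟨w, hw⟩ := this (-m)
    have hwm : d₂L w ∈ Ms := by rw [hw]; exact neg_mem hm
    refine ⟨⟨_, hmkQ2 w hwm⟩, ?_⟩
    rw [hf₃ w _ (neg_mem hwm)]
    simp [hw]
end

section
/- Let (L, α_L) be a perfect Hom-Lie algebra (L = [L,L]), acting on itself by its bracket. Then the second homology H₂^α(L) with trivial coefficients is isomorphic as a vector space to the kernel of the homomorphism ψ : L⋆L → L given on generators by ψ(l⋆l') = [l,l']. -/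
open TensorProduct

/-- A bilinear map vanishing on the diagonal, as an alternating map. -/
def altOfBil {K L M : Type} [Field K] [AddCommGroup L] [Module K L] [AddCommGroup M] [Module K M]
    (B : L →ₗ[K] L →ₗ[K] M) (hB : ∀ x, B x x = 0) : L [⋀^Fin 2]→ₗ[K] M :=
  { MultilinearMap.mk' (fun v : Fin 2 → L => B (v 0) (v 1))
      (by intro v i x y; fin_cases i <;> simp [Function.update])
      (by intro v i c x; fin_cases i <;> simp [Function.update]) with
    map_eq_zero_of_eq' := by
      intro v i j h hij
      fin_cases i <;> fin_cases j <;> simp_all }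

theorem wedge_eq {K L : Type} [Field K] [AddCommGroup L] [Module K L] (n : ℕ) (v : Fin n → L) :
    wedge (K := K) n v = exteriorPower.ιMulti K n v := by
  apply Subtype.ext
  simp [wedge]

theorem upd0 {L : Type} (x y z : L) : Function.update ![x, y] 0 z = ![z, y] := by
  ext i; fin_cases i <;> rfl

theorem upd1 {L : Type} (x y z : L) : Function.update ![x, y] 1 z = ![x, z] := by
  ext i; fin_cases i <;> rfl

/-- The wedge as a bilinear map. -/
def wedgeBil (K L : Type) [Field K] [AddCommGroup L] [Module K L] :
    L →ₗ[K] L →ₗ[K] ↥(⋀[K]^2 L) :=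
  LinearMap.mk₂ K (fun x y => wedge 2 ![x, y])
    (by intro x x' y
        have := (exteriorPower.ιMulti K 2 (M := L)).map_update_add ![x, y] 0 x x'
        simpa only [wedge_eq, upd0, upd1] using this)
    (by intro c x y
        have := (exteriorPower.ιMulti K 2 (M := L)).map_update_smul ![x, y] 0 c x
        simpa only [wedge_eq, upd0, upd1] using this)
    (by intro x y y'
        have := (exteriorPower.ιMulti K 2 (M := L)).map_update_add ![x, y] 1 y y'
        simpa only [wedge_eq, upd0, upd1] using this)
    (by intro c x y
        have := (exteriorPower.ιMulti K 2 (M := L)).map_update_smul ![x, y] 1 c y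
        simpa only [wedge_eq, upd0, upd1] using this)

theorem wedgeBil_self {K L : Type} [Field K] [AddCommGroup L] [Module K L] (x : L) :
    wedgeBil K L x x = 0 := by
  change wedge 2 ![x, x] = 0
  rw [wedge_eq]
  exact (exteriorPower.ιMulti K 2 (M := L)).map_eq_zero_of_eq ![x, x] (i := 0) (j := 1) rfl
    (by decide)

theorem alt_skew {K L M : Type} [Field K] [AddCommGroup L] [Module K L] [AddCommGroup M]
    [Module K M] (B : L →ₗ[K] L →ₗ[K] M) (hB : ∀ x, B x x = 0) (x y : L) :
    B x y = - B y x := by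
  have := hB (x + y)
  simp only [map_add, LinearMap.add_apply, hB, zero_add, add_zero] at this
  exact eq_neg_of_add_eq_zero_right this

/-- Let `(L, α_L)` be a perfect Hom-Lie algebra acting on itself by its
bracket.  Then the second homology `H₂^α(L)` with trivial coefficients — realized as the
kernel of the map `Λ²L/Im(d₃) → L` induced by `d₂`, where `d₂(x∧y) = −[x,y]` and
`d₃(x∧y∧z) = −[x,y]∧α(z) + [x,z]∧α(y) − [y,z]∧α(x)` — is isomorphic as a vector space to
the kernel of the homomorphism `ψ : L⋆L → L`, `l⋆l' ↦ [l,l']`. -/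
theorem statement13 {K L : Type} [Field K] [AddCommGroup L] [Module K L]
    (HL : HomLieStr K L)
    (hperf : Submodule.span K {z | ∃ x y, z = HL.br x y} = ⊤)
    (aLL : HomAction HL HL) (haLL : ∀ x y : L, aLL.act x y = HL.br x y)
    (ψ : ((L ⊗[K] L) ⧸ Dsub HL.br HL.α HL.br HL.α aLL.act aLL.act) →ₗ[K] L)
    (hψ : ∀ x y : L,
        ψ ((Dsub HL.br HL.α HL.br HL.α aLL.act aLL.act).mkQ (x ⊗ₜ[K] y)) = HL.br x y)
    (d₂ : ↥(⋀[K]^2 L) →ₗ[K] L)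
    (hd₂ : ∀ x y : L, d₂ (wedge 2 ![x, y]) = - HL.br x y)
    (d₃ : ↥(⋀[K]^3 L) →ₗ[K] ↥(⋀[K]^2 L))
    (hd₃ : ∀ x y z : L, d₃ (wedge 3 ![x, y, z]) =
        - wedge 2 ![HL.br x y, HL.α z] + wedge 2 ![HL.br x z, HL.α y]
          - wedge 2 ![HL.br y z, HL.α x])
    (d₂bar : (↥(⋀[K]^2 L) ⧸ LinearMap.range d₃) →ₗ[K] L)
    (hd₂bar : ∀ z, d₂bar ((LinearMap.range d₃).mkQ z) = d₂ z) :
    Nonempty (↥(LinearMap.ker d₂bar) ≃ₗ[K] ↥(LinearMap.ker ψ)) := by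
  revert ψ d₂bar
  generalize hD : Dsub HL.br HL.α HL.br HL.α aLL.act aLL.act = D
  generalize hR : LinearMap.range d₃ = R
  intro ψ hψ d₂bar hd₂bar
  -- the bilinear map into the quotient of the tensor square
  let S : L →ₗ[K] L →ₗ[K] ((L ⊗[K] L) ⧸ D) := (TensorProduct.mk K L L).compr₂ D.mkQ
  have hS : ∀ x y, S x y = D.mkQ (x ⊗ₜ[K] y) := fun x y => rfl
  have memD : ∀ t, t ∈ D → D.mkQ t = 0 := fun t ht => by simpa using ht
  have hSc : ∀ x y, S (HL.br x y) (HL.br x y) = 0 := by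
    intro x y
    have h : D.mkQ (HL.br y x ⊗ₜ[K] HL.br x y) = 0 := by
      apply memD
      rw [← hD]
      apply Submodule.subset_span
      refine Or.inl (Or.inl (Or.inr ⟨x, y, ?_⟩))
      simp only [haLL]
    rw [← hS, HL.skew y x, map_neg, LinearMap.neg_apply, neg_eq_zero] at h
    exact h
  have hSd : ∀ x y x' y', S (HL.br x y) (HL.br x' y') + S (HL.br x' y') (HL.br x y) = 0 := by
    intro x y x' y'
    have h : D.mkQ (HL.br y x ⊗ₜ[K] HL.br x' y' + HL.br y' x' ⊗ₜ[K] HL.br x y) = 0 := by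
      apply memD
      rw [← hD]
      apply Submodule.subset_span
      refine Or.inl (Or.inr ⟨x, x', y, y', ?_⟩)
      simp only [haLL]
    rw [map_add, ← hS, ← hS, HL.skew y x, HL.skew y' x', map_neg, LinearMap.neg_apply, map_neg,
      LinearMap.neg_apply, ← neg_add, neg_eq_zero] at h
    exact h
  have mem : ∀ x : L, x ∈ Submodule.span K {z | ∃ x y, z = HL.br x y} := by
    intro x; rw [hperf]; trivial
  have hSskew : ∀ u v, S u v + S v u = 0 := by
    intro u v
    induction mem u using Submodule.span_induction with
    | mem u hu =>
      obtain ⟨x, y, rfl⟩ := hu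
      induction mem v using Submodule.span_induction with
      | mem v hv => obtain ⟨x', y', rfl⟩ := hv; exact hSd _ _ _ _
      | zero => simp
      | add a b _ _ ha hb =>
        simp only [map_add, LinearMap.add_apply]
        rw [add_add_add_comm, ha, hb, add_zero]
      | smul c a _ ha =>
        simp only [map_smul, LinearMap.smul_apply]
        rw [← smul_add, ha, smul_zero]
    | zero => simp
    | add a b _ _ ha hb =>
      simp only [map_add, LinearMap.add_apply]
      rw [add_add_add_comm, ha, hb, add_zero]
    | smul c a _ ha =>
      simp only [map_smul, LinearMap.smul_apply]
      rw [← smul_add, ha, smul_zero]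
  have hSself : ∀ u, S u u = 0 := by
    intro u
    induction mem u using Submodule.span_induction with
    | mem u hu => obtain ⟨x, y, rfl⟩ := hu; exact hSc _ _
    | zero => simp
    | add a b _ _ ha hb =>
      simp only [map_add, LinearMap.add_apply, ha, hb, zero_add, add_zero]
      exact hSskew _ _
    | smul c a _ ha => simp [ha]
  have hSa : ∀ x y z, S (HL.br x y) (HL.α z) - S (HL.α x) (HL.br y z)
      + S (HL.α y) (HL.br x z) = 0 := by
    intro x y z
    simp only [hS]
    rw [← map_sub, ← map_add]
    apply memD
    rw [← hD]
    apply Submodule.subset_span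
    refine Or.inl (Or.inl (Or.inl (Or.inl ⟨x, y, z, ?_⟩)))
    simp only [haLL]
  -- the map out of the exterior square
  let g0 : ↥(⋀[K]^2 L) →ₗ[K] ((L ⊗[K] L) ⧸ D) :=
    exteriorPower.alternatingMapLinearEquiv (altOfBil S hSself)
  have hg0 : ∀ x y, g0 (wedge 2 ![x, y]) = S x y := by
    intro x y
    rw [wedge_eq]
    simp only [g0, exteriorPower.alternatingMapLinearEquiv_apply_ιMulti]
    rfl
  have hg0R : R ≤ LinearMap.ker g0 := by
    rw [← hR, LinearMap.range_le_ker_iff]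
    apply exteriorPower.linearMap_ext
    ext v
    have hv : v = ![v 0, v 1, v 2] := by ext i; fin_cases i <;> rfl
    rw [hv]
    simp only [LinearMap.compAlternatingMap_apply, ← wedge_eq, LinearMap.comp_apply, hd₃, map_add,
      map_sub, map_neg, hg0, LinearMap.zero_apply]
    have h := hSa (v 0) (v 1) (v 2)
    rw [alt_skew S hSself (HL.α (v 0)), alt_skew S hSself (HL.α (v 1))] at h
    rw [← neg_eq_zero, ← h]
    abel
  let g : (↥(⋀[K]^2 L) ⧸ R) →ₗ[K] ((L ⊗[K] L) ⧸ D) := R.liftQ g0 hg0R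
  have hg : ∀ x y, g (R.mkQ (wedge 2 ![x, y])) = S x y := fun x y => hg0 x y
  -- the map out of the tensor square
  let W : L →ₗ[K] L →ₗ[K] (↥(⋀[K]^2 L) ⧸ R) := (wedgeBil K L).compr₂ R.mkQ
  have hW : ∀ x y, W x y = R.mkQ (wedge 2 ![x, y]) := fun x y => rfl
  have hWself : ∀ x, W x x = 0 := by
    intro x
    change R.mkQ (wedgeBil K L x x) = 0
    rw [wedgeBil_self, map_zero]
  have hWs := alt_skew W hWself
  have hWd : ∀ x y z, - W (HL.br x y) (HL.α z) + W (HL.br x z) (HL.α y)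
      - W (HL.br y z) (HL.α x) = 0 := by
    intro x y z
    simp only [hW]
    rw [← map_neg, ← map_add, ← map_sub, ← hd₃]
    simp [← hR]
  let f0 : (L ⊗[K] L) →ₗ[K] (↥(⋀[K]^2 L) ⧸ R) := TensorProduct.lift W
  have hf0 : ∀ x y, f0 (x ⊗ₜ[K] y) = W x y := fun x y => TensorProduct.lift.tmul x y
  have hf0D : D ≤ LinearMap.ker f0 := by
    rw [← hD, Dsub, Submodule.span_le]
    rintro t ((((⟨x, y, z, rfl⟩ | ⟨x, y, z, rfl⟩) | ⟨x, y, rfl⟩) | ⟨x, x', y, y', rfl⟩) |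
      ⟨x, x', x'', y, y', y'', rfl⟩)
    · simp only [SetLike.mem_coe, LinearMap.mem_ker, map_add, map_sub, hf0, haLL]
      rw [hWs (HL.α x), hWs (HL.α y), ← neg_eq_zero, ← hWd x y z]
      abel
    · simp only [SetLike.mem_coe, LinearMap.mem_ker, map_add, map_sub, hf0, haLL]
      rw [hWs (HL.α x), HL.skew z x, HL.skew y x, ← hWd x y z]
      simp only [map_neg, LinearMap.neg_apply]
      abel
    · simp only [SetLike.mem_coe, LinearMap.mem_ker, hf0, haLL]
      rw [HL.skew y x, map_neg, LinearMap.neg_apply, hWself, neg_zero]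
    · simp only [SetLike.mem_coe, LinearMap.mem_ker, map_add, hf0, haLL]
      rw [HL.skew y x, HL.skew y' x', hWs (HL.br x' y' |> Neg.neg)]
      simp only [map_neg, LinearMap.neg_apply]
      abel
    · simp only [SetLike.mem_coe, LinearMap.mem_ker, map_add, hf0, haLL]
      rw [HL.skew y x, HL.skew y' x', HL.skew y'' x'',
        HL.skew (- HL.br x'' y''), ← neg_eq_zero,
        ← hWd (HL.br x y) (HL.br x' y') (HL.br x'' y'')]
      simp only [map_neg, LinearMap.neg_apply]
      abel
  let f : ((L ⊗[K] L) ⧸ D) →ₗ[K] (↥(⋀[K]^2 L) ⧸ R) := D.liftQ f0 hf0D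
  have hf : ∀ x y, f (S x y) = W x y := fun x y => hf0 x y
  have hgf : g ∘ₗ f = LinearMap.id := by
    apply Submodule.linearMap_qext
    apply TensorProduct.ext'
    intro x y
    change g (f (S x y)) = S x y
    rw [hf, hW, hg]
  have hfg : f ∘ₗ g = LinearMap.id := by
    apply Submodule.linearMap_qext
    apply exteriorPower.linearMap_ext
    ext v
    have hv : v = ![v 0, v 1] := by ext i; fin_cases i <;> rfl
    rw [hv]
    simp only [LinearMap.compAlternatingMap_apply, ← wedge_eq, LinearMap.comp_apply,
      LinearMap.id_apply]
    rw [hg, hf, hW]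
  have hψf : ψ = - (d₂bar ∘ₗ f) := by
    apply Submodule.linearMap_qext
    apply TensorProduct.ext'
    intro x y
    change ψ (D.mkQ (x ⊗ₜ[K] y)) = - d₂bar (f (S x y))
    rw [hψ, hf, hW, hd₂bar, hd₂, neg_neg]
  let e : ((L ⊗[K] L) ⧸ D) ≃ₗ[K] (↥(⋀[K]^2 L) ⧸ R) := LinearEquiv.ofLinearMap f g hfg hgf
  have hker : LinearMap.ker ψ = (LinearMap.ker d₂bar).comap (e : _ →ₗ[K] _) := by
    ext t
    rw [hψf]
    simp [e]
  rw [hker]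
  exact ⟨(e.ofSubmodule' (LinearMap.ker d₂bar)).symm⟩
end

section
/- Let (M, α_M) ↣ (K, α_K) →π (L, α_L) be a central extension with (K, α_K) an α-perfect Hom-Lie algebra (K = [α_K(K), α_K(K)]), and let (M', α_{M'}) ↣ (K', α_{K'}) →π' (L, α_L) be an α-central extension. Then there exists at most one homomorphism of Hom-Lie algebras f : (K, α_K) → (K', α_{K'}) such that π' ∘ f = π. -/
open TensorProduct

/-- Let `(M,α_M) ↣ (K₀,α_{K₀}) →π (L,α_L)` be a central extension with
`(K₀, α_{K₀})` α-perfect (`K₀ = [α(K₀), α(K₀)]`), and let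
`(M',α_{M'}) ↣ (K',α_{K'}) →π' (L,α_L)` be an α-central extension.  Then there is at most
one homomorphism of Hom-Lie algebras `f : (K₀,α_{K₀}) → (K',α_{K'})` with `π' ∘ f = π`.
(Central: the kernel brackets trivially with everything; α-central: the image of the
kernel under the structure endomorphism brackets trivially with everything.) -/
theorem statement15 {K K₀ K' L : Type} [Field K]
    [AddCommGroup K₀] [Module K K₀] [AddCommGroup K'] [Module K K']
    [AddCommGroup L] [Module K L]
    (HK₀ : HomLieStr K K₀) (HK' : HomLieStr K K') (HL : HomLieStr K L)
    (π : K₀ →ₗ[K] L) (hπ : IsHomLieHom HK₀ HL π) (hπsurj : Function.Surjective π)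
    (hcentral : ∀ x, π x = 0 → ∀ y, HK₀.br x y = 0)
    (hαperf : Submodule.span K {z | ∃ x y, z = HK₀.br (HK₀.α x) (HK₀.α y)} = ⊤)
    (π' : K' →ₗ[K] L) (hπ' : IsHomLieHom HK' HL π') (hπ'surj : Function.Surjective π')
    (hαcentral : ∀ x, π' x = 0 → ∀ y, HK'.br (HK'.α x) y = 0) :
    ∀ f₁ f₂ : K₀ →ₗ[K] K', IsHomLieHom HK₀ HK' f₁ → IsHomLieHom HK₀ HK' f₂ →
      π' ∘ₗ f₁ = π → π' ∘ₗ f₂ = π → f₁ = f₂ := by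
  intro f₁ f₂ h₁ h₂ e₁ e₂
  have key : ∀ x y, HK'.br (HK'.α (f₁ x)) y = HK'.br (HK'.α (f₂ x)) y := by
    intro x y
    have h0 : π' (f₁ x - f₂ x) = 0 := by
      have a := LinearMap.congr_fun e₁ x
      have b := LinearMap.congr_fun e₂ x
      simp only [LinearMap.comp_apply] at a b
      rw [map_sub, a, b, sub_self]
    have h := hαcentral _ h0 y
    rw [map_sub, map_sub, LinearMap.sub_apply] at h
    exact sub_eq_zero.mp h
  refine LinearMap.ext_on hαperf ?_
  rintro z ⟨x, y, rfl⟩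
  rw [h₁.1, h₂.1, h₁.2, h₁.2, h₂.2, h₂.2, key, HK'.skew, key, ← HK'.skew]
end

section
/- Let (A, α_A) be a Hom-associative algebra over a field K of characteristic 0, regarded as a Hom-Lie algebra with commutator bracket [a,b] = ab − ba, and let (L^α(A), ᾱ_A) be the Hom-Lie algebra (A⊗A)/J(A,α) with bracket [a⊗b, a'⊗b'] = [a,b]⊗[a',b']. Then: (1) the formulas ^{a'}(a⊗b) = [a',a]⊗α_A(b) + α_A(a)⊗[a',b] and ^{(a⊗b)}a' = [[a,b], a'] define Hom-actions of (A, α_A) on (L^α(A), ᾱ_A) and of (L^α(A), ᾱ_A) on (A, α_A), respectively; and (2) if (A, α_A) satisfies the α-identity condition [a,b] = [α_A(a), b] for all a,b ∈ A, then these two Hom-actions are compatible. -/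
open TensorProduct

/-- A (multiplicative) Hom-associative algebra structure on a vector space `A`. -/
structure HomAssocStr (K : Type) [Field K] (A : Type) [AddCommGroup A] [Module K A] : Type where
  mul : A →ₗ[K] A →ₗ[K] A
  α : A →ₗ[K] A
  hassoc : ∀ a b c, mul (α a) (mul b c) = mul (mul a b) (α c)
  αmul : ∀ a b, α (mul a b) = mul (α a) (α b)

/-- The subspace `J(A,α)` of `A ⊗ A` generated by `a⊗b + b⊗a` and
`ab⊗α(c) − α(a)⊗bc + ca⊗α(b)`; the quotient `(A⊗A)/J(A,α)` is `L^α(A)`. -/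
def Jsub {K A : Type} [Field K] [AddCommGroup A] [Module K A] (HA : HomAssocStr K A) :
    Submodule K (A ⊗[K] A) :=
  Submodule.span K
    ({x | ∃ a b, x = a ⊗ₜ[K] b + b ⊗ₜ[K] a} ∪
     {x | ∃ a b c, x = HA.mul a b ⊗ₜ[K] HA.α c - HA.α a ⊗ₜ[K] HA.mul b c
        + HA.mul c a ⊗ₜ[K] HA.α b})

theorem Lind {K A : Type} [Field K] [AddCommGroup A] [Module K A] (J : Submodule K (A ⊗[K] A))
    {W : Type} [AddCommGroup W] [Module K W] (f g : ((A ⊗[K] A) ⧸ J) →ₗ[K] W)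
    (h : ∀ a b, f (J.mkQ (a ⊗ₜ[K] b)) = g (J.mkQ (a ⊗ₜ[K] b))) (m : (A ⊗[K] A) ⧸ J) :
    f m = g m := by
  have : f = g := by
    apply Submodule.linearMap_qext
    apply TensorProduct.ext'
    intro a b
    exact h a b
  rw [this]

theorem mkanti {K A : Type} [Field K] [AddCommGroup A] [Module K A] (HA : HomAssocStr K A)
    (a b : A) : (Jsub HA).mkQ (a ⊗ₜ[K] b) = - (Jsub HA).mkQ (b ⊗ₜ[K] a) := by
  rw [eq_neg_iff_add_eq_zero, ← map_add]
  rw [Submodule.mkQ_apply, Submodule.Quotient.mk_eq_zero]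
  exact Submodule.subset_span (Or.inl ⟨a, b, rfl⟩)

theorem mkT {K A : Type} [Field K] [AddCommGroup A] [Module K A] (HA : HomAssocStr K A)
    (a b c : A) : (Jsub HA).mkQ (HA.mul a b ⊗ₜ[K] HA.α c) + (Jsub HA).mkQ (HA.mul b c ⊗ₜ[K] HA.α a)
      + (Jsub HA).mkQ (HA.mul c a ⊗ₜ[K] HA.α b) = 0 := by
  have h : (Jsub HA).mkQ (HA.mul a b ⊗ₜ[K] HA.α c - HA.α a ⊗ₜ[K] HA.mul b c
        + HA.mul c a ⊗ₜ[K] HA.α b) = 0 := by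
    rw [Submodule.mkQ_apply, Submodule.Quotient.mk_eq_zero]
    exact Submodule.subset_span (Or.inr ⟨a, b, c, rfl⟩)
  rw [map_add, map_sub, mkanti HA (HA.α a), sub_neg_eq_add] at h
  exact h

theorem mkD {K A : Type} [Field K] [AddCommGroup A] [Module K A] (HA : HomAssocStr K A)
    (HLA : HomLieStr K A) (h : ∀ a b, HLA.br a b = HA.mul a b - HA.mul b a)
    (a b c : A) : (Jsub HA).mkQ (HLA.br a b ⊗ₜ[K] HA.α c) + (Jsub HA).mkQ (HLA.br b c ⊗ₜ[K] HA.α a)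
      + (Jsub HA).mkQ (HLA.br c a ⊗ₜ[K] HA.α b) = 0 := by
  have h1 := mkT HA a b c
  have h2 := mkT HA b a c
  simp only [h, TensorProduct.sub_tmul, map_sub]
  rw [← sub_zero (0 : (A ⊗[K] A) ⧸ Jsub HA)]
  nth_rewrite 1 [← h1]
  rw [← h2]
  abel

theorem exβ {K A : Type} [Field K] [AddCommGroup A] [Module K A] (HA : HomAssocStr K A)
    (HLA : HomLieStr K A) (h : ∀ a b, HLA.br a b = HA.mul a b - HA.mul b a) :
    ∃ β : ((A ⊗[K] A) ⧸ Jsub HA) →ₗ[K] A, ∀ a b, β ((Jsub HA).mkQ (a ⊗ₜ[K] b)) = HLA.br a b := by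
  refine ⟨(Jsub HA).liftQ (TensorProduct.lift HLA.br) ?_, ?_⟩
  · unfold Jsub
    rw [Submodule.span_le]
    rintro x (⟨a, b, rfl⟩ | ⟨a, b, c, rfl⟩)
    · simp [h]
    · simp only [SetLike.mem_coe, LinearMap.mem_ker, map_add, map_sub, TensorProduct.lift.tmul, h]
      have e1 := HA.hassoc a b c
      have e2 := HA.hassoc c a b
      have e3 := HA.hassoc b c a
      simp only [e1, e2, e3]
      abel
  · intro a b
    simp

/-- Let `(A, α_A)` be a Hom-associative algebra over a field of
characteristic 0, with its commutator Hom-Lie structure `[a,b] = ab − ba`, and let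
`(L^α(A), ᾱ_A)` be the Hom-Lie algebra `(A⊗A)/J(A,α)` with bracket
`[a⊗b, a'⊗b'] = [a,b]⊗[a',b']`.  Then
(1) `^{a'}(a⊗b) = [a',a]⊗α(b) + α(a)⊗[a',b]` defines a Hom-action of `(A, α_A)` on
`(L^α(A), ᾱ_A)` and `^{(a⊗b)}a' = [[a,b],a']` defines a Hom-action of `(L^α(A), ᾱ_A)` on
`(A, α_A)`; and (2) if `(A, α_A)` satisfies the α-identity condition
`[a,b] = [α(a),b]`, these two Hom-actions are compatible. -/
theorem statement18 {K A : Type} [Field K] [CharZero K] [AddCommGroup A] [Module K A]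
    (HA : HomAssocStr K A)
    -- the commutator Hom-Lie structure on A
    (HLA : HomLieStr K A)
    (hHLA : (∀ a b, HLA.br a b = HA.mul a b - HA.mul b a) ∧ HLA.α = HA.α)
    -- the Hom-Lie structure of L^α(A) on (A ⊗ A)/J(A,α)
    (HLA' : HomLieStr K ((A ⊗[K] A) ⧸ Jsub HA))
    (hHLA' : (∀ a b a' b', HLA'.br ((Jsub HA).mkQ (a ⊗ₜ[K] b)) ((Jsub HA).mkQ (a' ⊗ₜ[K] b')) =
        (Jsub HA).mkQ (HLA.br a b ⊗ₜ[K] HLA.br a' b')) ∧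
      (∀ a b, HLA'.α ((Jsub HA).mkQ (a ⊗ₜ[K] b)) = (Jsub HA).mkQ (HA.α a ⊗ₜ[K] HA.α b))) :
    (∃ act1 : HomAction HLA HLA', ∀ a' a b,
        act1.act a' ((Jsub HA).mkQ (a ⊗ₜ[K] b)) =
        (Jsub HA).mkQ (HLA.br a' a ⊗ₜ[K] HA.α b) + (Jsub HA).mkQ (HA.α a ⊗ₜ[K] HLA.br a' b)) ∧
    (∃ act2 : HomAction HLA' HLA, ∀ a b a',
        act2.act ((Jsub HA).mkQ (a ⊗ₜ[K] b)) a' = HLA.br (HLA.br a b) a') ∧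
    ((∀ a b, HLA.br a b = HLA.br (HA.α a) b) →
      ∀ (act1 : HomAction HLA HLA') (act2 : HomAction HLA' HLA),
        (∀ a' a b, act1.act a' ((Jsub HA).mkQ (a ⊗ₜ[K] b)) =
          (Jsub HA).mkQ (HLA.br a' a ⊗ₜ[K] HA.α b)
            + (Jsub HA).mkQ (HA.α a ⊗ₜ[K] HLA.br a' b)) →
        (∀ a b a', act2.act ((Jsub HA).mkQ (a ⊗ₜ[K] b)) a' = HLA.br (HLA.br a b) a') →
        Compatible act1 act2) := by
  obtain ⟨hbr, hα⟩ := hHLA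
  obtain ⟨hbr', hα'⟩ := hHLA'
  obtain ⟨β, hβ⟩ := exβ HA HLA hbr
  have D := mkD HA HLA hbr
  have anti := mkanti HA
  have αbr : ∀ x y, HA.α (HLA.br x y) = HLA.br (HA.α x) (HA.α y) := by
    intro x y; rw [← hα]; exact HLA.αbr x y
  have jac : ∀ x y z, HLA.br (HA.α x) (HLA.br y z) + HLA.br (HA.α z) (HLA.br x y)
      + HLA.br (HA.α y) (HLA.br z x) = 0 := by
    intro x y z; rw [← hα]; exact HLA.jacobi x y z
  have key : ∀ x a b, (Jsub HA).mkQ (HLA.br x a ⊗ₜ[K] HA.α b)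
      + (Jsub HA).mkQ (HA.α a ⊗ₜ[K] HLA.br x b) = (Jsub HA).mkQ (HA.α x ⊗ₜ[K] HLA.br a b) := by
    intro x a b
    have := D x a b
    rw [anti (HA.α a), anti (HA.α x), HLA.skew x b, TensorProduct.neg_tmul, map_neg, neg_neg,
      eq_neg_iff_add_eq_zero, ← this]
    abel
  have βα : ∀ m, β (HLA'.α m) = HA.α (β m) :=
    Lind _ (β ∘ₗ HLA'.α) (HA.α ∘ₗ β) (by intro a b; simp only [LinearMap.comp_apply, hα', hβ, αbr])
  have br' : ∀ m m', HLA'.br m m' = (Jsub HA).mkQ (β m ⊗ₜ[K] β m') := by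
    intro m m'
    refine Lind _ (HLA'.br.flip m')
      ((Jsub HA).mkQ ∘ₗ ((TensorProduct.mk K A A).flip (β m')) ∘ₗ β) ?_ m
    intro a b
    refine Lind _ (HLA'.br ((Jsub HA).mkQ (a ⊗ₜ[K] b)))
      ((Jsub HA).mkQ ∘ₗ ((TensorProduct.mk K A A) (β ((Jsub HA).mkQ (a ⊗ₜ[K] b)))) ∘ₗ β) ?_ m'
    intro a' b'
    simp only [LinearMap.comp_apply, hbr', hβ, TensorProduct.mk_apply]
  have βbr : ∀ m m', β (HLA'.br m m') = HLA.br (β m) (β m') := by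
    intro m m'; rw [br', hβ]
  refine ⟨⟨⟨LinearMap.mk₂ K (fun x m => (Jsub HA).mkQ (HA.α x ⊗ₜ[K] β m)) ?_ ?_ ?_ ?_,
      ?_, ?_, ?_⟩, ?_⟩, ⟨⟨HLA.br ∘ₗ β, ?_, ?_, ?_⟩, ?_⟩, ?_⟩
  · intro x y m; simp only [map_add, TensorProduct.add_tmul]
  · intro c x m; rw [map_smul, ← TensorProduct.smul_tmul', map_smul]
  · intro x m m'; simp only [map_add, TensorProduct.tmul_add]
  · intro c x m; simp only [map_smul, TensorProduct.tmul_smul]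
  · intro x y m
    simp only [LinearMap.mk₂_apply, hα, βα, hβ]
    rw [← key (HA.α x), αbr, anti (HA.α (HA.α y))]
    abel
  · intro x m m'
    simp only [LinearMap.mk₂_apply, hα, βα, br', hβ]
    rw [← key]
  · intro x m
    simp only [LinearMap.mk₂_apply, hα, βα, hα']
  · intro x a b
    simp only [LinearMap.mk₂_apply, hβ]
    rw [key]
  · intro m m' a
    simp only [LinearMap.comp_apply, hα, βα, βbr]
    have := jac (β m) (β m') a
    rw [HLA.skew a (β m), map_neg] at this
    rw [HLA.skew _ (HA.α a), ← sub_eq_zero, ← neg_eq_zero, ← this]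
    abel
  · intro m a b
    simp only [LinearMap.comp_apply, hα, βα]
    have := jac (β m) a b
    rw [HLA.skew b (β m), map_neg] at this
    rw [HLA.skew _ (HA.α b), ← sub_eq_zero, ← this]
    abel
  · intro m a
    simp only [LinearMap.comp_apply, hα, βα, αbr]
  · intro a b a'
    simp only [LinearMap.comp_apply, hβ]
  · intro hid act1 act2 h1 h2
    have f1 : ∀ x m, act1.act x m = (Jsub HA).mkQ (HA.α x ⊗ₜ[K] β m) := by
      intro x
      refine Lind _ (act1.act x) ((Jsub HA).mkQ ∘ₗ (TensorProduct.mk K A A (HA.α x)) ∘ₗ β) ?_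
      intro a b
      rw [h1, key]
      simp only [LinearMap.comp_apply, hβ, TensorProduct.mk_apply]
    have f2 : ∀ m x, act2.act m x = HLA.br (β m) x := by
      intro m x
      refine Lind _ (act2.act.flip x) (HLA.br.flip x ∘ₗ β) ?_ m
      intro a b
      simp only [LinearMap.comp_apply, LinearMap.flip_apply, hβ, h2]
    refine ⟨?_, ?_⟩
    · intro x n y
      rw [f1, f2, f2, hβ, ← hid, HLA.skew y, HLA.skew (β n) x, map_neg, LinearMap.neg_apply, neg_neg]
    · intro n x n'
      rw [f1, f2, f1, br', hβ, αbr, ← hid, anti (β n'), HLA.skew (HA.α x), TensorProduct.neg_tmul, map_neg, neg_neg]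
end

section
/- Let (A, α_A) be a Hom-associative algebra over a field K of characteristic 0 satisfying the α-identity condition [a,b] = [α_A(a), b] for all a,b ∈ A. Then there is an exact sequence of vector spaces A⋆HC₁^α(A) → Ker(ψ₂ : A⋆L^α(A) → L^α(A)) → Ker(ψ₃ : A⋆[A,A] → [A,A]) → HC₁^α(A) → HC₁^M(A, α_A) → [A,A]/[A,[A,A]] → 0, where A is regarded as a Hom-Lie algebra via the commutator bracket, ⋆ denotes the Hom-Lie tensor product with respect to the Hom-actions induced by the commutator, ψ₂ and ψ₃ are the canonical homomorphisms m⋆n ↦ ᵐn, the first two maps are induced by the inclusion HC₁^α(A) ↪ L^α(A) and the projection L^α(A) ↠ [A,A] respectively, the map Ker(ψ₃) → HC₁^α(A) is the connecting homomorphism of the snake lemma, and the last two maps are the canonical projections. -/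
open TensorProduct

/-- The subspace of relations defining the first Milnor cyclic homology
`HC₁^M(A, α_A) = (A⊗A)/⟨a⊗b + b⊗a, ab⊗α(c) − α(a)⊗bc + ca⊗α(b), α(a)⊗bc − α(a)⊗cb⟩`. -/
def MilnorSub {K A : Type} [Field K] [AddCommGroup A] [Module K A] (HA : HomAssocStr K A) :
    Submodule K (A ⊗[K] A) :=
  Submodule.span K
    ({x | ∃ a b, x = a ⊗ₜ[K] b + b ⊗ₜ[K] a} ∪
     {x | ∃ a b c, x = HA.mul a b ⊗ₜ[K] HA.α c - HA.α a ⊗ₜ[K] HA.mul b c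
        + HA.mul c a ⊗ₜ[K] HA.α b} ∪
     {x | ∃ a b c, x = HA.α a ⊗ₜ[K] HA.mul b c - HA.α a ⊗ₜ[K] HA.mul c b})

/-- The subspace `[A,A]` of `A` spanned by all commutators. -/
def commSub {K A : Type} [Field K] [AddCommGroup A] [Module K A] (HA : HomAssocStr K A) :
    Submodule K A :=
  Submodule.span K {x | ∃ a b, x = HA.mul a b - HA.mul b a}

/-- The subspace `[A,[A,A]]` of `A`. -/
def commSub2 {K A : Type} [Field K] [AddCommGroup A] [Module K A] (HA : HomAssocStr K A) :
    Submodule K A :=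
  Submodule.span K {x | ∃ a, ∃ t ∈ commSub HA, x = HA.mul a t - HA.mul t a}

theorem Dsub_le_map_aux {K M N N' : Type} [Field K] [AddCommGroup M] [Module K M]
    [AddCommGroup N] [Module K N] [AddCommGroup N'] [Module K N']
    (brM : M →ₗ[K] M →ₗ[K] M) (αM : M →ₗ[K] M)
    (brN : N →ₗ[K] N →ₗ[K] N) (αN : N →ₗ[K] N)
    (actMN : M →ₗ[K] N →ₗ[K] N) (actNM : N →ₗ[K] M →ₗ[K] M)
    (brN' : N' →ₗ[K] N' →ₗ[K] N') (αN' : N' →ₗ[K] N')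
    (actMN' : M →ₗ[K] N' →ₗ[K] N') (actNM' : N' →ₗ[K] M →ₗ[K] M)
    (p : N →ₗ[K] N') (hp : Function.Surjective p)
    (hbr : ∀ x y, p (brN x y) = brN' (p x) (p y))
    (hα : ∀ x, p (αN x) = αN' (p x))
    (hact : ∀ m x, p (actMN m x) = actMN' m (p x))
    (hact' : ∀ x m, actNM x m = actNM' (p x) m) :
    Dsub brM αM brN' αN' actMN' actNM' ≤
      (Dsub brM αM brN αN actMN actNM).map (p.lTensor M) := by
  unfold Dsub
  rw [Submodule.map_span]
  apply Submodule.span_mono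
  rintro x ((((⟨m, m', n, rfl⟩ | ⟨m, n, n', rfl⟩) | ⟨m, n, rfl⟩) | ⟨m, m', n, n', rfl⟩) |
    ⟨m, m', m'', n, n', n'', rfl⟩)
  · obtain ⟨n, rfl⟩ := hp n
    refine ⟨_, Or.inl (Or.inl (Or.inl (Or.inl ⟨m, m', n, rfl⟩))), ?_⟩
    simp [hα, hact]
  · obtain ⟨n, rfl⟩ := hp n
    obtain ⟨n', rfl⟩ := hp n'
    refine ⟨_, Or.inl (Or.inl (Or.inl (Or.inr ⟨m, n, n', rfl⟩))), ?_⟩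
    simp [hα, hbr, hact']
  · obtain ⟨n, rfl⟩ := hp n
    refine ⟨_, Or.inl (Or.inl (Or.inr ⟨m, n, rfl⟩)), ?_⟩
    simp [hact, hact']
  · obtain ⟨n, rfl⟩ := hp n
    obtain ⟨n', rfl⟩ := hp n'
    refine ⟨_, Or.inl (Or.inr ⟨m, m', n, n', rfl⟩), ?_⟩
    simp [hact, hact']
  · obtain ⟨n, rfl⟩ := hp n
    obtain ⟨n', rfl⟩ := hp n'
    obtain ⟨n'', rfl⟩ := hp n''
    refine ⟨_, Or.inr ⟨m, m', m'', n, n', n'', rfl⟩, ?_⟩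
    simp [hα, hact, hact']

theorem LInd_aux {K A : Type} [Field K] [AddCommGroup A] [Module K A]
    (J : Submodule K (A ⊗[K] A)) {P : ((A ⊗[K] A) ⧸ J) → Prop}
    (h0 : P 0) (ht : ∀ a b, P (J.mkQ (a ⊗ₜ[K] b))) (ha : ∀ x y, P x → P y → P (x + y))
    (x) : P x := by
  obtain ⟨x, rfl⟩ := J.mkQ_surjective x
  induction x with
  | zero => simpa using h0
  | tmul a b => exact ht a b
  | add x y hx hy => rw [map_add]; exact ha _ _ hx hy

theorem J_rel_aux {K A : Type} [Field K] [AddCommGroup A] [Module K A] (HA : HomAssocStr K A)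
    (br : A →ₗ[K] A →ₗ[K] A) (hbr : ∀ a b, br a b = HA.mul a b - HA.mul b a) (x a b : A) :
    (Jsub HA).mkQ (br x a ⊗ₜ[K] HA.α b) + (Jsub HA).mkQ (HA.α a ⊗ₜ[K] br x b) =
      (Jsub HA).mkQ (HA.α x ⊗ₜ[K] br a b) := by
  have sk : ∀ a b, (Jsub HA).mkQ (a ⊗ₜ[K] b) = - (Jsub HA).mkQ (b ⊗ₜ[K] a) := by
    intro a b
    rw [eq_neg_iff_add_eq_zero, ← map_add, Submodule.mkQ_apply, Submodule.Quotient.mk_eq_zero]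
    exact Submodule.subset_span (Or.inl ⟨a, b, rfl⟩)
  have cy : ∀ a b c, (Jsub HA).mkQ (HA.mul a b ⊗ₜ[K] HA.α c)
      - (Jsub HA).mkQ (HA.α a ⊗ₜ[K] HA.mul b c) + (Jsub HA).mkQ (HA.mul c a ⊗ₜ[K] HA.α b) = 0 := by
    intro a b c
    rw [← map_sub, ← map_add, Submodule.mkQ_apply, Submodule.Quotient.mk_eq_zero]
    exact Submodule.subset_span (Or.inr ⟨a, b, c, rfl⟩)
  have h1 := cy x a b
  have h2 := cy x b a
  simp only [hbr, TensorProduct.sub_tmul, TensorProduct.tmul_sub, map_sub]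
  rw [sk (HA.α a), sk (HA.α a)]
  rw [← sub_eq_zero]
  have h3 := congrArg₂ (· - ·) h1 h2
  simp only [sub_zero] at h3
  rw [← h3]
  abel

/-- Let `(A, α_A)` be a Hom-associative algebra over a field of
characteristic 0 satisfying the α-identity condition `[a,b] = [α(a),b]`.  Then there is an
exact sequence of vector spaces
`A⋆HC₁^α(A) → Ker(ψ₂ : A⋆L^α(A) → L^α(A)) → Ker(ψ₃ : A⋆[A,A] → [A,A]) → HC₁^α(A) → HC₁^M(A,α_A) → [A,A]/[A,[A,A]] → 0`,
where `ψ₂`, `ψ₃` are the canonical homomorphisms `m⋆n ↦ ᵐn`, the first two maps are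
induced by the inclusion `HC₁^α(A) ↪ L^α(A)` and the projection `L^α(A) ↠ [A,A]`, the
third map is the connecting homomorphism of the snake lemma, and the last two maps are
the canonical projections. -/
theorem statement19 {K A : Type} [Field K] [CharZero K] [AddCommGroup A] [Module K A]
    (HA : HomAssocStr K A)
    -- the α-identity condition
    (hαid : ∀ a b, HA.mul a b - HA.mul b a = HA.mul (HA.α a) b - HA.mul b (HA.α a))
    -- the commutator Hom-Lie structure on A
    (HLA : HomLieStr K A)
    (hHLA : (∀ a b, HLA.br a b = HA.mul a b - HA.mul b a) ∧ HLA.α = HA.α)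
    -- the Hom-Lie structure of L^α(A)
    (HLA' : HomLieStr K ((A ⊗[K] A) ⧸ Jsub HA))
    (hHLA' : (∀ a b a' b', HLA'.br ((Jsub HA).mkQ (a ⊗ₜ[K] b)) ((Jsub HA).mkQ (a' ⊗ₜ[K] b')) =
        (Jsub HA).mkQ (HLA.br a b ⊗ₜ[K] HLA.br a' b')) ∧
      (∀ a b, HLA'.α ((Jsub HA).mkQ (a ⊗ₜ[K] b)) = (Jsub HA).mkQ (HA.α a ⊗ₜ[K] HA.α b)))
    -- the Hom-actions of A and L^α(A) on each other
    (actALα : HomAction HLA HLA')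
    (hactALα : ∀ a' a b, actALα.act a' ((Jsub HA).mkQ (a ⊗ₜ[K] b)) =
        (Jsub HA).mkQ (HLA.br a' a ⊗ₜ[K] HA.α b) + (Jsub HA).mkQ (HA.α a ⊗ₜ[K] HLA.br a' b))
    (actLαA : HomAction HLA' HLA)
    (hactLαA : ∀ a b a', actLαA.act ((Jsub HA).mkQ (a ⊗ₜ[K] b)) a' = HLA.br (HLA.br a b) a')
    -- ψ : L^α(A) → [A,A] ⊆ A, a⊗b ↦ ab − ba, whose kernel is HC₁^α(A)
    (ψ0 : ((A ⊗[K] A) ⧸ Jsub HA) →ₗ[K] A)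
    (hψ0 : ∀ a b, ψ0 ((Jsub HA).mkQ (a ⊗ₜ[K] b)) = HA.mul a b - HA.mul b a)
    -- the Hom-Lie structure on the ideal [A,A] of A, and the actions between A and [A,A]
    (HAA : HomLieStr K ↥(commSub HA))
    (hHAA : (∀ s t : ↥(commSub HA), (HAA.br s t : A) = HLA.br (s : A) (t : A)) ∧
            (∀ s : ↥(commSub HA), (HAA.α s : A) = HA.α (s : A)))
    (aA_AA : HomAction HLA HAA)
    (haA_AA : ∀ (a : A) (t : ↥(commSub HA)), (aA_AA.act a t : A) = HLA.br a (t : A))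
    (aAA_A : HomAction HAA HLA)
    (haAA_A : ∀ (t : ↥(commSub HA)) (a : A), aAA_A.act t a = HLA.br (t : A) a)
    -- the abelian Hom-Lie structure on HC₁^α(A) = Ker ψ0, and the actions between A and it
    (HHC : HomLieStr K ↥(LinearMap.ker ψ0))
    (hHHC : (∀ s t, HHC.br s t = 0) ∧
            (∀ s : ↥(LinearMap.ker ψ0),
              (HHC.α s : (A ⊗[K] A) ⧸ Jsub HA) = HLA'.α (s : (A ⊗[K] A) ⧸ Jsub HA)))
    (aA_HC : HomAction HLA HHC)
    (haA_HC : ∀ (a : A) (h : ↥(LinearMap.ker ψ0)),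
        (aA_HC.act a h : (A ⊗[K] A) ⧸ Jsub HA) = actALα.act a (h : (A ⊗[K] A) ⧸ Jsub HA))
    (aHC_A : HomAction HHC HLA)
    (haHC_A : ∀ (h : ↥(LinearMap.ker ψ0)) (a : A),
        aHC_A.act h a = actLαA.act (h : (A ⊗[K] A) ⧸ Jsub HA) a)
    -- the canonical homomorphisms ψ₂ : A⋆L^α(A) → L^α(A) and ψ₃ : A⋆[A,A] → [A,A]
    (ψ₂ : ((A ⊗[K] ((A ⊗[K] A) ⧸ Jsub HA)) ⧸
        Dsub HLA.br HLA.α HLA'.br HLA'.α actALα.act actLαA.act) →ₗ[K]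
        ((A ⊗[K] A) ⧸ Jsub HA))
    (hψ₂ : ∀ (a : A) (t : (A ⊗[K] A) ⧸ Jsub HA),
        ψ₂ ((Dsub HLA.br HLA.α HLA'.br HLA'.α actALα.act actLαA.act).mkQ (a ⊗ₜ[K] t)) =
        actALα.act a t)
    (ψ₃ : ((A ⊗[K] ↥(commSub HA)) ⧸
        Dsub HLA.br HLA.α HAA.br HAA.α aA_AA.act aAA_A.act) →ₗ[K] ↥(commSub HA))
    (hψ₃ : ∀ (a : A) (t : ↥(commSub HA)),
        ψ₃ ((Dsub HLA.br HLA.α HAA.br HAA.α aA_AA.act aAA_A.act).mkQ (a ⊗ₜ[K] t)) =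
        aA_AA.act a t)
    -- the homomorphism A⋆L^α(A) → A⋆[A,A] induced by the projection L^α(A) ↠ [A,A]
    (G : ((A ⊗[K] ((A ⊗[K] A) ⧸ Jsub HA)) ⧸
        Dsub HLA.br HLA.α HLA'.br HLA'.α actALα.act actLαA.act) →ₗ[K]
        ((A ⊗[K] ↥(commSub HA)) ⧸ Dsub HLA.br HLA.α HAA.br HAA.α aA_AA.act aAA_A.act))
    (hG : ∀ a b c : A,
        G ((Dsub HLA.br HLA.α HLA'.br HLA'.α actALα.act actLαA.act).mkQ
            (a ⊗ₜ[K] (Jsub HA).mkQ (b ⊗ₜ[K] c))) =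
        (Dsub HLA.br HLA.α HAA.br HAA.α aA_AA.act aAA_A.act).mkQ
          (a ⊗ₜ[K] (⟨HA.mul b c - HA.mul c b, Submodule.subset_span ⟨b, c, rfl⟩⟩ :
            ↥(commSub HA))))
    -- the maps of the six-term sequence
    (F₁ : ((A ⊗[K] ↥(LinearMap.ker ψ0)) ⧸
        Dsub HLA.br HLA.α HHC.br HHC.α aA_HC.act aHC_A.act) →ₗ[K] ↥(LinearMap.ker ψ₂))
    (hF₁ : ∀ (a : A) (h : ↥(LinearMap.ker ψ0))
        (hm : (Dsub HLA.br HLA.α HLA'.br HLA'.α actALα.act actLαA.act).mkQ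
            (a ⊗ₜ[K] (h : (A ⊗[K] A) ⧸ Jsub HA)) ∈ LinearMap.ker ψ₂),
        F₁ ((Dsub HLA.br HLA.α HHC.br HHC.α aA_HC.act aHC_A.act).mkQ (a ⊗ₜ[K] h)) =
          ⟨(Dsub HLA.br HLA.α HLA'.br HLA'.α actALα.act actLαA.act).mkQ
            (a ⊗ₜ[K] (h : (A ⊗[K] A) ⧸ Jsub HA)), hm⟩)
    (F₂ : ↥(LinearMap.ker ψ₂) →ₗ[K] ↥(LinearMap.ker ψ₃))
    (hF₂ : ∀ x (hx : x ∈ LinearMap.ker ψ₂) (hx' : G x ∈ LinearMap.ker ψ₃),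
        F₂ ⟨x, hx⟩ = ⟨G x, hx'⟩)
    (F₃ : ↥(LinearMap.ker ψ₃) →ₗ[K] ↥(LinearMap.ker ψ0))
    (hF₃ : ∀ y (h : G y ∈ LinearMap.ker ψ₃) (h2 : ψ₂ y ∈ LinearMap.ker ψ0),
        F₃ ⟨G y, h⟩ = ⟨ψ₂ y, h2⟩)
    (F₄ : ↥(LinearMap.ker ψ0) →ₗ[K] ((A ⊗[K] A) ⧸ MilnorSub HA))
    (hF₄ : ∀ (s : A ⊗[K] A) (hs : (Jsub HA).mkQ s ∈ LinearMap.ker ψ0),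
        F₄ ⟨(Jsub HA).mkQ s, hs⟩ = (MilnorSub HA).mkQ s)
    (F₅ : ((A ⊗[K] A) ⧸ MilnorSub HA) →ₗ[K]
        (↥(commSub HA) ⧸ Submodule.comap (commSub HA).subtype (commSub2 HA)))
    (hF₅ : ∀ a b : A, F₅ ((MilnorSub HA).mkQ (a ⊗ₜ[K] b)) =
        Submodule.Quotient.mk
          (⟨HA.mul a b - HA.mul b a, Submodule.subset_span ⟨a, b, rfl⟩⟩ : ↥(commSub HA))) :
    LinearMap.range F₁ = LinearMap.ker F₂ ∧
    LinearMap.range F₂ = LinearMap.ker F₃ ∧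
    LinearMap.range F₃ = LinearMap.ker F₄ ∧
    LinearMap.range F₄ = LinearMap.ker F₅ ∧
    Function.Surjective F₅ := by
  obtain ⟨hbr, hα⟩ := hHLA
  -- action formula
  have hψbr : ∀ a b, ψ0 ((Jsub HA).mkQ (a ⊗ₜ[K] b)) = HLA.br a b := fun a b => by
    rw [hψ0, hbr]
  have hid : ∀ a b, HLA.br (HA.α a) b = HLA.br a b := fun a b => by
    rw [hbr, hbr, ← hαid]
  have hact0 : ∀ a t, actALα.act a t = (Jsub HA).mkQ (HA.α a ⊗ₜ[K] ψ0 t) := by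
    intro a t
    induction t using LInd_aux with
    | h0 => simp
    | ht b c => rw [hactALα, J_rel_aux HA HLA.br hbr, hψbr]
    | ha x y hx hy => rw [map_add, hx, hy, map_add, TensorProduct.tmul_add, map_add]
  have hψC : ∀ t, ψ0 t ∈ commSub HA := by
    intro t
    induction t using LInd_aux with
    | h0 => simp
    | ht b c => rw [hψ0]; exact Submodule.subset_span ⟨b, c, rfl⟩
    | ha x y hx hy => rw [map_add]; exact add_mem hx hy
  let p : ((A ⊗[K] A) ⧸ Jsub HA) →ₗ[K] ↥(commSub HA) := ψ0.codRestrict _ hψC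
  have hpc : ∀ t, ((p t : ↥(commSub HA)) : A) = ψ0 t := fun t => rfl
  have hpt : ∀ b c, p ((Jsub HA).mkQ (b ⊗ₜ[K] c)) =
      ⟨HA.mul b c - HA.mul c b, Submodule.subset_span ⟨b, c, rfl⟩⟩ := fun b c =>
    Subtype.ext (hψ0 b c)
  have hrange : ∀ c ∈ commSub HA, ∃ t, ψ0 t = c := by
    intro c hc
    have : commSub HA ≤ LinearMap.range ψ0 := by
      apply Submodule.span_le.2
      rintro _ ⟨a, b, rfl⟩
      exact ⟨_, hψ0 a b⟩
    exact this hc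
  have hp : Function.Surjective p := by
    rintro ⟨c, hc⟩
    obtain ⟨t, ht⟩ := hrange c hc
    exact ⟨t, Subtype.ext ht⟩
  have hψact : ∀ a t, ψ0 (actALα.act a t) = HLA.br a (ψ0 t) := by
    intro a t
    rw [hact0, hψbr, hid]
  have hpact : ∀ a t, p (actALα.act a t) = aA_AA.act a (p t) := by
    intro a t
    apply Subtype.ext
    rw [haA_AA, hpc, hpc, hψact]
  have hpα : ∀ t, p (HLA'.α t) = HAA.α (p t) := by
    intro t
    apply Subtype.ext
    rw [hHAA.2, hpc, hpc]
    induction t using LInd_aux with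
    | h0 => simp
    | ht b c => rw [hHLA'.2, hψbr, hψbr, ← hα, HLA.αbr]
    | ha x y hx hy => simp only [map_add, hx, hy]
  have hpbr : ∀ s t, p (HLA'.br s t) = HAA.br (p s) (p t) := by
    intro s t
    apply Subtype.ext
    rw [hHAA.1, hpc, hpc, hpc]
    induction s using LInd_aux with
    | h0 => simp
    | ht a b =>
      induction t using LInd_aux with
      | h0 => simp
      | ht c d => rw [hHLA'.1, hψbr, hψbr, hψbr]
      | ha x y hx hy => simp only [map_add, hx, hy]
    | ha x y hx hy => simp only [map_add, LinearMap.add_apply, hx, hy]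
  have hpact' : ∀ t a, actLαA.act t a = aAA_A.act (p t) a := by
    intro t a
    rw [haAA_A, hpc]
    induction t using LInd_aux with
    | h0 => simp
    | ht b c => rw [hactLαA, hψbr]
    | ha x y hx hy => simp only [map_add, LinearMap.add_apply, hx, hy]
  have hD := Dsub_le_map_aux HLA.br HLA.α HLA'.br HLA'.α actALα.act actLαA.act
    HAA.br HAA.α aA_AA.act aAA_A.act p hp hpbr hpα hpact hpact'
  generalize hD2 : Dsub HLA.br HLA.α HLA'.br HLA'.α actALα.act actLαA.act = D2 at *
  generalize hD3 : Dsub HLA.br HLA.α HAA.br HAA.α aA_AA.act aAA_A.act = D3 at *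
  generalize hD1 : Dsub HLA.br HLA.α HHC.br HHC.α aA_HC.act aHC_A.act = D1 at *
  have hGm : ∀ x, G (D2.mkQ x) = D3.mkQ (p.lTensor A x) := by
    intro x
    induction x with
    | zero => simp
    | add x y hx hy => simp only [map_add, hx, hy]
    | tmul a t =>
      rw [LinearMap.lTensor_tmul]
      induction t using LInd_aux with
      | h0 => simp
      | ht b c => rw [hG, hpt]
      | ha x y hx hy => simp only [map_add, TensorProduct.tmul_add, hx, hy]
  have hGs : Function.Surjective G := by
    intro y
    obtain ⟨y, rfl⟩ := D3.mkQ_surjective y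
    obtain ⟨x, rfl⟩ := LinearMap.lTensor_surjective A hp y
    exact ⟨_, hGm x⟩
  have hsq : ∀ x, ψ₃ (G x) = p (ψ₂ x) := by
    intro x
    obtain ⟨x, rfl⟩ := D2.mkQ_surjective x
    rw [hGm]
    induction x with
    | zero => simp
    | add x y hx hy => simp only [map_add, hx, hy]
    | tmul a t => rw [LinearMap.lTensor_tmul, hψ₃, hψ₂, hpact]
  have hker : ∀ x, ψ₂ x ∈ LinearMap.ker ψ0 ↔ G x ∈ LinearMap.ker ψ₃ := by
    intro x
    rw [LinearMap.mem_ker, LinearMap.mem_ker, hsq, ← hpc]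
    exact ZeroMemClass.coe_eq_zero
  have hk2 : ∀ x, ψ₂ x = 0 → G x ∈ LinearMap.ker ψ₃ := by
    intro x hx
    rw [← hker, hx]; exact zero_mem _
  have hmil : (Jsub HA) ≤ MilnorSub HA := Submodule.span_mono Set.subset_union_left
  have hψ₂mil : ∀ x, ∀ s, (Jsub HA).mkQ s = ψ₂ x → s ∈ MilnorSub HA := by
    intro x
    obtain ⟨x, rfl⟩ := D2.mkQ_surjective x
    have key : ∀ t, t ∈ LinearMap.range (ψ₂.comp D2.mkQ) → t ∈ (MilnorSub HA).map (Jsub HA).mkQ := by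
      rintro _ ⟨x, rfl⟩
      induction x with
      | zero => simp
      | add x y hx hy => rw [map_add]; exact add_mem hx hy
      | tmul a t =>
        rw [LinearMap.comp_apply, hψ₂]
        induction t using LInd_aux with
        | h0 => simp
        | ha x y hx hy => rw [map_add]; exact add_mem hx hy
        | ht b c =>
          rw [hact0, hψ0]
          refine ⟨_, Submodule.subset_span (Or.inr ⟨a, b, c, rfl⟩), ?_⟩
          rw [TensorProduct.tmul_sub]
    intro s hs
    obtain ⟨s', hs', h⟩ := key _ ⟨x, rfl⟩
    rw [LinearMap.comp_apply, ← hs] at h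
    have h' : s - s' ∈ Jsub HA := (Submodule.Quotient.eq _).1 h.symm
    have := add_mem (hmil h') hs'
    simpa using this
  have hmilψ₂ : ∀ s ∈ MilnorSub HA, ∃ x, ψ₂ x = (Jsub HA).mkQ s := by
    intro s hs
    have : MilnorSub HA ≤ (LinearMap.range ψ₂).comap (Jsub HA).mkQ := by
      apply Submodule.span_le.2
      rintro s (hs | ⟨a, b, c, rfl⟩)
      · have hs' : s ∈ Jsub HA := Submodule.subset_span hs
        have h0 : (Jsub HA).mkQ s = 0 := (Submodule.Quotient.mk_eq_zero _).2 hs'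
        show (Jsub HA).mkQ s ∈ LinearMap.range ψ₂
        rw [h0]; exact zero_mem _
      · refine ⟨D2.mkQ (a ⊗ₜ[K] (Jsub HA).mkQ (b ⊗ₜ[K] c)), ?_⟩
        rw [hψ₂, hact0, hψ0, TensorProduct.tmul_sub]
    exact this hs
  have hF₅' : ∀ s : A ⊗[K] A, F₅ ((MilnorSub HA).mkQ s) =
      Submodule.Quotient.mk (p ((Jsub HA).mkQ s)) := by
    intro s
    induction s with
    | zero => simp
    | add x y hx hy => rw [map_add, map_add, hx, hy, map_add, map_add]; rfl
    | tmul a b => rw [hF₅, hpt]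
  refine ⟨?_, ?_, ?_, ?_, ?_⟩
  · have hm : ∀ (a : A) (h : ↥(LinearMap.ker ψ0)),
        D2.mkQ (a ⊗ₜ[K] (h : (A ⊗[K] A) ⧸ Jsub HA)) ∈ LinearMap.ker ψ₂ := by
      intro a h
      rw [LinearMap.mem_ker, hψ₂, hact0, LinearMap.mem_ker.1 h.2]
      simp
    have hF₁' : ∀ x, (F₁ (D1.mkQ x) : _) =
        D2.mkQ ((LinearMap.ker ψ0).subtype.lTensor A x) := by
      intro x
      induction x with
      | zero => simp
      | add x y hx hy => simp only [map_add, Submodule.coe_add, hx, hy]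
      | tmul a h => rw [hF₁ a h (hm a h)]; rfl
    have hex : Function.Exact ((LinearMap.ker ψ0).subtype.lTensor A) (p.lTensor A) := by
      refine lTensor_exact A ?_ hp
      intro t
      rw [← ZeroMemClass.coe_eq_zero, hpc]
      simp
    apply le_antisymm
    · rintro _ ⟨x, rfl⟩
      obtain ⟨x, rfl⟩ := D1.mkQ_surjective x
      rw [LinearMap.mem_ker]
      have h1 := hF₁' x
      have h2 := (F₁ (D1.mkQ x)).2
      rw [show F₁ (D1.mkQ x) = ⟨(F₁ (D1.mkQ x)).1, h2⟩ from rfl, hF₂ _ _ (hk2 _ h2)]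
      apply Subtype.ext
      show G (F₁ (D1.mkQ x)).1 = 0
      rw [h1, hGm, hex.apply_apply_eq_zero, map_zero]
    · rintro ⟨y, hy⟩ h
      rw [LinearMap.mem_ker, hF₂ _ _ (hk2 _ hy)] at h
      have h' : G y = 0 := congrArg Subtype.val h
      obtain ⟨y, rfl⟩ := D2.mkQ_surjective y
      rw [hGm] at h'
      have h3 : p.lTensor A y ∈ D3 := (Submodule.Quotient.mk_eq_zero _).1 h'
      obtain ⟨d, hd, hdy⟩ := hD h3
      have h4 : p.lTensor A (y - d) = 0 := by rw [map_sub, hdy, sub_self]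
      obtain ⟨z, hz⟩ := (hex _).1 h4
      refine ⟨D1.mkQ z, Subtype.ext ?_⟩
      rw [hF₁', hz, map_sub]
      have : D2.mkQ d = 0 := (Submodule.Quotient.mk_eq_zero _).2 hd
      rw [this, sub_zero]
  · apply le_antisymm
    · rintro _ ⟨⟨x, hx⟩, rfl⟩
      have hx' : ψ₂ x = 0 := hx
      rw [hF₂ x hx (hk2 x hx), LinearMap.mem_ker, hF₃ x _ ((hker x).2 (hk2 x hx))]
      exact Subtype.ext hx'
    · rintro ⟨y, hy⟩ h
      obtain ⟨y, rfl⟩ := hGs y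
      rw [LinearMap.mem_ker, hF₃ y hy ((hker y).2 hy)] at h
      have h' : ψ₂ y = 0 := congrArg Subtype.val h
      exact ⟨⟨y, h'⟩, hF₂ _ _ _⟩
  · apply le_antisymm
    · rintro _ ⟨⟨y, hy⟩, rfl⟩
      obtain ⟨y, rfl⟩ := hGs y
      rw [hF₃ y hy ((hker y).2 hy), LinearMap.mem_ker]
      obtain ⟨s, hs⟩ := (Jsub HA).mkQ_surjective (ψ₂ y)
      have h2 := (hker y).2 hy
      have := hψ₂mil y s hs
      have h3 : (Jsub HA).mkQ s ∈ LinearMap.ker ψ0 := by rw [hs]; exact h2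
      rw [show (⟨ψ₂ y, h2⟩ : ↥(LinearMap.ker ψ0)) = ⟨(Jsub HA).mkQ s, h3⟩ from
        Subtype.ext hs.symm, hF₄]
      exact (Submodule.Quotient.mk_eq_zero _).2 this
    · rintro ⟨s, hs⟩ h
      obtain ⟨s, rfl⟩ := (Jsub HA).mkQ_surjective s
      rw [LinearMap.mem_ker, hF₄] at h
      obtain ⟨x, hx⟩ := hmilψ₂ s ((Submodule.Quotient.mk_eq_zero _).1 h)
      have h2 : ψ₂ x ∈ LinearMap.ker ψ0 := by rw [hx]; exact hs
      refine ⟨⟨G x, (hker x).1 h2⟩, ?_⟩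
      rw [hF₃ x _ h2]
      exact Subtype.ext hx
  · apply le_antisymm
    · rintro _ ⟨⟨s, hs⟩, rfl⟩
      obtain ⟨s, rfl⟩ := (Jsub HA).mkQ_surjective s
      rw [hF₄, LinearMap.mem_ker, hF₅']
      have : p ((Jsub HA).mkQ s) = 0 := Subtype.ext hs
      rw [this]; rfl
    · intro x hx
      obtain ⟨x, rfl⟩ := (MilnorSub HA).mkQ_surjective x
      rw [LinearMap.mem_ker, hF₅', Submodule.Quotient.mk_eq_zero] at hx
      have hx' : ψ0 ((Jsub HA).mkQ x) ∈ commSub2 HA := hx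
      have key : commSub2 HA ≤ (MilnorSub HA).map (ψ0.comp (Jsub HA).mkQ) := by
        apply Submodule.span_le.2
        rintro _ ⟨a, t, ht, rfl⟩
        obtain ⟨u, rfl⟩ := hrange t ht
        refine ⟨HA.α a ⊗ₜ[K] ψ0 u, hψ₂mil (D2.mkQ (a ⊗ₜ[K] u)) _ ?_, ?_⟩
        · rw [hψ₂, hact0]
        · rw [LinearMap.comp_apply, hψbr, hid, hbr]
      obtain ⟨m, hm, hmx⟩ := key hx'
      have hmx' : ψ0 ((Jsub HA).mkQ m) = ψ0 ((Jsub HA).mkQ x) := hmx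
      have h0 : (Jsub HA).mkQ (x - m) ∈ LinearMap.ker ψ0 := by
        rw [LinearMap.mem_ker, map_sub, map_sub, hmx', sub_self]
      refine ⟨⟨_, h0⟩, ?_⟩
      rw [hF₄, map_sub]
      have : (MilnorSub HA).mkQ m = 0 := (Submodule.Quotient.mk_eq_zero _).2 hm
      rw [this, sub_zero]
  · intro y
    obtain ⟨c, rfl⟩ := Submodule.Quotient.mk_surjective _ y
    obtain ⟨t, rfl⟩ := hp c
    obtain ⟨s, rfl⟩ := (Jsub HA).mkQ_surjective t
    exact ⟨_, hF₅' s⟩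
end
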